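/- arXiv:2411.03854 — 4 statements merged into one kernel-verified Lean document; each statement's English description precedes it below -/
import Mathlib

section
/- Let p and q be prime numbers with p < q < p², and set M = p⁴q². Then there exist functions f, g : ℤ_M → ℝ such that: f(0) = g(0) = 1; f ≥ 0 and g ≥ 0; f̂ ≥ 0 and ĝ ≥ 0; f * g = 1_{ℤ_M} (the constant-one function on ℤ_M); f and g are both step functions; the mask polynomials F and G both satisfy condition (T1); and neither F nor G satisfies condition (T2). -/
/-!
A step function on `ℤ_M`, `M = p⁴q²`, is a `5 × 3` table of values indexed by the pairs `(a, b)` with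
`gcd(z, M) = p ^ a q ^ b`. Writing it as a combination of indicators of the subgroups
`p ^ i q ^ j ℤ_M` (whose transforms are again multiples of subgroup indicators, `fhat_indicator`)
shows that its Fourier transform is given by another such table (`fhat_tab`), so that every condition
in the theorem is a finite condition on four tables `fTab`, `fHat`, `gTab`, `gHat`.

The supports of `f̂` and `ĝ` are chosen to meet only at `0`, where both transforms equal `p²q`; hence
`f̂ ĝ = M · 1_{0}`, which by the convolution theorem and Fourier inversion is `f * g = 1`
(`conv_eq_one`). In terms of the order `d` of the frequency, `f̂` is nonzero exactly at
`d = 1, p², p³, q², pq, pq², p²q², p³q, p⁴q²`, and `ĝ` at `d = 1, p, p⁴, q, p²q, p³q², p⁴q`. So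
`S_F = {p, p⁴, q}` and `S_G = {p², p³, q²}`, and both products of primes are `p²q`: this is (T1).
But `f̂ ≠ 0` at order `pq` although `p, q ∈ S_F`, and `ĝ ≠ 0` at order `p³q²` although
`p³, q² ∈ S_G`, so (T2) fails for both. Nonnegativity of all four tables is clear from `1 < p < q`.
-/

open Finset

noncomputable def fhat (M : ℕ) [NeZero M] (f : ZMod M → ℝ) (ξ : ZMod M) : ℂ :=
  ∑ z : ZMod M, (f z : ℂ) *
    Complex.exp (-2 * Real.pi * Complex.I * ((z.val : ℂ) * (ξ.val : ℂ)) / (M : ℂ))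

noncomputable def conv (M : ℕ) [NeZero M] (f g : ZMod M → ℝ) (x : ZMod M) : ℝ :=
  ∑ y : ZMod M, f y * g (x - y)

def IsStepFun (M : ℕ) [NeZero M] (f : ZMod M → ℝ) : Prop :=
  ∀ z w : ZMod M, Nat.gcd z.val M = Nat.gcd w.val M → f z = f w

/-- `Φ_d | F` : the Fourier transform of `f` vanishes on the step class `R_{M/d}`. -/
def cycDvd (M : ℕ) [NeZero M] (f : ZMod M → ℝ) (d : ℕ) : Prop :=
  ∀ ξ : ZMod M, Nat.gcd ξ.val M = M / d → fhat M f ξ = 0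

open scoped Classical in
noncomputable def SF (M : ℕ) [NeZero M] (f : ZMod M → ℝ) : Finset ℕ :=
  M.divisors.filter (fun s => IsPrimePow s ∧ cycDvd M f s)

noncomputable def satT1 (M : ℕ) [NeZero M] (f : ZMod M → ℝ) : Prop :=
  ∑ z : ZMod M, f z = ∏ s ∈ SF M f, (s.minFac : ℝ)

def satT2 (M : ℕ) [NeZero M] (f : ZMod M → ℝ) : Prop :=
  ∀ S : Finset ℕ, S.Nonempty → S ⊆ SF M f →
    (∀ s ∈ S, ∀ t ∈ S, s ≠ t → s.minFac ≠ t.minFac) →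
    cycDvd M f (∏ s ∈ S, s)

def IsTiling (M : ℕ) [NeZero M] (A B : Finset (ZMod M)) : Prop :=
  ∀ z : ZMod M, ∃! ab : ZMod M × ZMod M, ab.1 ∈ A ∧ ab.2 ∈ B ∧ ab.1 + ab.2 = z

/-- `H` is a union of step classes. -/
def IsStepSet (M : ℕ) [NeZero M] (H : Set (ZMod M)) : Prop :=
  ∀ z w : ZMod M, Nat.gcd z.val M = Nat.gcd w.val M → (z ∈ H ↔ w ∈ H)

def divStar (M : ℕ) [NeZero M] (A : Finset (ZMod M)) : Set (ZMod M) :=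
  {z | ∃ a ∈ A, ∃ a' ∈ A, Nat.gcd z.val M = Nat.gcd (a - a').val M}

noncomputable def cliqueNum (M : ℕ) [NeZero M] (H : Set (ZMod M)) : ℕ :=
  sSup {n | ∃ C : Finset (ZMod M), (∀ x ∈ C, ∀ y ∈ C, x - y ∈ H) ∧ C.card = n}

noncomputable def Dplus (M : ℕ) [NeZero M] (H : Set (ZMod M)) : ℝ :=
  sSup {t : ℝ | ∃ h : ZMod M → ℝ, IsStepFun M h ∧ h 0 = 1 ∧
    (∀ ξ, (fhat M h ξ).im = 0 ∧ 0 ≤ (fhat M h ξ).re) ∧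
    (∀ z ∈ H, 0 ≤ h z) ∧ (∀ z ∉ H, h z = 0) ∧ t = ∑ z : ZMod M, h z}

noncomputable def Dminus (M : ℕ) [NeZero M] (H : Set (ZMod M)) : ℝ :=
  sSup {t : ℝ | ∃ h : ZMod M → ℝ, IsStepFun M h ∧ h 0 = 1 ∧
    (∀ ξ, (fhat M h ξ).im = 0 ∧ 0 ≤ (fhat M h ξ).re) ∧
    (∀ z ∉ H, h z ≤ 0) ∧ t = ∑ z : ZMod M, h z}

noncomputable def Ddelta (M : ℕ) [NeZero M] (δ : ℝ) (H : Set (ZMod M)) : ℝ :=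
  sSup {t : ℝ | ∃ h : ZMod M → ℝ, IsStepFun M h ∧ h 0 = 1 ∧
    (∀ ξ, (fhat M h ξ).im = 0 ∧ 0 ≤ (fhat M h ξ).re) ∧
    (∀ z ∈ H, δ ≤ h z) ∧ (∀ z ∉ H, h z = 0) ∧ t = ∑ z : ZMod M, h z}

open scoped Classical in
noncomputable def SH (M : ℕ) [NeZero M] (H : Set (ZMod M)) : Finset ℕ :=
  M.divisors.filter (fun s => IsPrimePow s ∧ ∀ ξ : ZMod M, Nat.gcd ξ.val M = M / s → ξ ∈ H)

noncomputable def kH (M : ℕ) [NeZero M] (H : Set (ZMod M)) : ℕ :=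
  ∏ s ∈ SH M H, s.minFac

def cubVertex (M : ℕ) [NeZero M] {K : ℕ} (p : Fin K → ℕ) (c : ZMod M)
    (ρ : Fin K → ℕ) (S : Finset (Fin K)) : ZMod M :=
  c + ∑ i ∈ S, ((ρ i * (M / p i) : ℕ) : ZMod M)

noncomputable def cubEval (M : ℕ) [NeZero M] {K : ℕ} (p : Fin K → ℕ) (c : ZMod M)
    (ρ : Fin K → ℕ) (f : ZMod M → ℝ) : ℝ :=
  ∑ S : Finset (Fin K), (-1 : ℝ) ^ S.card * f (cubVertex M p c ρ S)

noncomputable def hAfun (M : ℕ) [NeZero M] (A : Finset (ZMod M)) (z : ZMod M) : ℝ :=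
  (1 / ((A.card : ℝ) * (Nat.totient M : ℝ))) *
    ∑ r ∈ Finset.univ.filter (fun r : ZMod M => Nat.gcd r.val M = 1),
      conv M (fun x => if x ∈ A.image (fun a => r * a) then (1 : ℝ) else 0)
             (fun x => if x ∈ A.image (fun a => -(r * a)) then (1 : ℝ) else 0) z

noncomputable def fN (M : ℕ) [NeZero M] (f : ZMod M → ℝ) (N : ℕ) (z : ZMod N) : ℝ :=
  ∑ y ∈ Finset.univ.filter (fun y : ZMod M => ((y.val : ℕ) : ZMod N) = z), f y

/-! ### Step functions as tables -/

/-- The table entry of `t` at the step class of `z`: if `gcd(z, M) = p ^ a * q ^ b`, this is `t a b`. -/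
noncomputable def tab (p q M : ℕ) [NeZero M] (t : ℕ → ℕ → ℝ) (z : ZMod M) : ℝ :=
  t ((Nat.gcd z.val M).factorization p) ((Nat.gcd z.val M).factorization q)

/-- The mixed second difference of a table, with entries of negative index read as `0`; these are
the coefficients in the expansion of `tab` over indicators of subgroups. -/
def mixedDiff (t : ℕ → ℕ → ℝ) (i j : ℕ) : ℝ :=
  t i j - (if i = 0 then 0 else t (i - 1) j) - (if j = 0 then 0 else t i (j - 1))
    + (if i = 0 ∨ j = 0 then 0 else t (i - 1) (j - 1))

/-- `h` is the table of the Fourier transform of `tab t`. The indicator of `p ^ i * q ^ j ∣ z` has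
transform `p ^ (4 - i) * q ^ (2 - j)` times the indicator of `p ^ (4 - i) * q ^ (2 - j) ∣ ξ`. Both
tables are indexed by `(a, b)` with `gcd(·, M) = p ^ a * q ^ b`. -/
def IsHatTable (p q : ℕ) (t h : ℕ → ℕ → ℝ) : Prop :=
  ∀ a ≤ 4, ∀ b ≤ 2, ∑ i ∈ range 5, ∑ j ∈ range 3,
    (if 4 - i ≤ a ∧ 2 - j ≤ b then mixedDiff t i j * ((p : ℝ) ^ (4 - i) * (q : ℝ) ^ (2 - j)) else 0)
      = h a b

/-- A table is recovered from its mixed differences by telescoping. -/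
lemma sum_mixedDiff (t : ℕ → ℕ → ℝ) {a b : ℕ} (ha : a ≤ 4) (hb : b ≤ 2) :
    t a b = ∑ i ∈ range 5, ∑ j ∈ range 3, if i ≤ a ∧ j ≤ b then mixedDiff t i j else 0 := by
  interval_cases a <;> interval_cases b <;> simp [Finset.sum_range_succ, mixedDiff]

/-! ### Fourier transforms of subgroup indicators and of convolutions -/

lemma sum_zmod_val (M : ℕ) [NeZero M] (F : ℕ → ℂ) :
    ∑ z : ZMod M, F z.val = ∑ n ∈ range M, F n := by
  refine Finset.sum_nbij ZMod.val (fun z _ => by simpa using ZMod.val_lt z)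
    (fun x _ y _ h => ZMod.val_injective M h) (fun n hn => ?_) (fun _ _ => rfl)
  exact ⟨n, by simp, ZMod.val_cast_of_lt (by simpa using hn)⟩

lemma sum_range_dvd (d e : ℕ) (hd : 0 < d) (F : ℕ → ℂ) :
    ∑ n ∈ range (d * e), (if d ∣ n then F n else 0) = ∑ k ∈ range e, F (d * k) := by
  rw [← Finset.sum_filter]
  symm
  refine Finset.sum_nbij (fun k => d * k) (fun k hk => ?_)
    (fun x _ y _ h => Nat.eq_of_mul_eq_mul_left hd h) (fun n hn => ?_) (fun _ _ => rfl)
  · simp only [Finset.mem_filter, Finset.mem_range] at hk ⊢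
    exact ⟨Nat.mul_lt_mul_of_pos_left hk hd, dvd_mul_right _ _⟩
  · simp only [Finset.coe_filter, Finset.mem_range, Set.mem_ofPred_eq] at hn
    obtain ⟨h1, k, rfl⟩ := hn
    exact ⟨k, by simpa using lt_of_mul_lt_mul_left h1 (Nat.zero_le d), rfl⟩

/-- Poisson summation for the subgroup of multiples of `d` in `ℤ_M`, where `M = d * e`. -/
lemma fhat_indicator (M : ℕ) [NeZero M] (d e : ℕ) (hM : M = d * e) (ξ : ZMod M) :
    fhat M (fun z => if d ∣ z.val then 1 else 0) ξ = if e ∣ ξ.val then (e : ℂ) else 0 := by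
  have hM0 : M ≠ 0 := NeZero.ne M
  have hd : 0 < d := Nat.pos_of_ne_zero (by rintro rfl; simp at hM; exact hM0 hM)
  have he : 0 < e := Nat.pos_of_ne_zero (by rintro rfl; simp at hM; exact hM0 hM)
  have hη : IsPrimitiveRoot (Complex.exp (2 * Real.pi * Complex.I / M))⁻¹ M :=
    (Complex.isPrimitiveRoot_exp M hM0).inv
  set η := (Complex.exp (2 * Real.pi * Complex.I / M))⁻¹ with hηdef
  have hexp : ∀ n : ℕ, Complex.exp (-2 * Real.pi * Complex.I * ((n : ℂ) * (ξ.val : ℂ)) / (M : ℂ))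
      = η ^ (n * ξ.val) := by
    intro n
    rw [hηdef, ← Complex.exp_neg, ← Complex.exp_nat_mul]
    congr 1
    push_cast
    ring
  have h1 : fhat M (fun z => if d ∣ z.val then 1 else 0) ξ
      = ∑ z : ZMod M, (fun n : ℕ => if d ∣ n then η ^ (n * ξ.val) else 0) z.val := by
    unfold fhat
    refine Finset.sum_congr rfl fun z _ => ?_
    rw [hexp]
    by_cases h : d ∣ z.val <;> simp [h]
  have hdvd : M ∣ d * ξ.val ↔ e ∣ ξ.val := by
    generalize ξ.val = x
    rw [hM]
    exact Nat.mul_dvd_mul_iff_left hd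
  rw [h1, sum_zmod_val M fun n : ℕ => if d ∣ n then η ^ (n * ξ.val) else 0]
  generalize ξ.val = x at hdvd ⊢
  have h2 : ∑ n ∈ range M, (if d ∣ n then η ^ (n * x) else 0)
      = ∑ k ∈ range e, (η ^ (d * x)) ^ k := by
    conv_lhs => rw [hM]
    rw [sum_range_dvd d e hd]
    refine Finset.sum_congr rfl fun k _ => ?_
    rw [← pow_mul]; congr 1; ring
  rw [h2]
  have h3 : η ^ (d * x) = 1 ↔ e ∣ x := by
    rw [hη.pow_eq_one_iff_dvd, hdvd]
  by_cases h : e ∣ x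
  · simp [h3.2 h, h]
  · rw [geom_sum_eq (fun h' => h (h3.1 h')), if_neg h, ← pow_mul,
      (hη.pow_eq_one_iff_dvd _).2 ⟨x, by rw [hM]; ring⟩]
    simp

lemma fhat_eq_dft (M : ℕ) [NeZero M] (f : ZMod M → ℝ) (ξ : ZMod M) :
    fhat M f ξ = ZMod.dft (fun z => (f z : ℂ)) ξ := by
  rw [ZMod.dft_apply]
  unfold fhat
  refine Finset.sum_congr rfl fun z _ => ?_
  have : -(z * ξ) = ((-((z.val : ℤ) * (ξ.val : ℤ)) : ℤ) : ZMod M) := by simp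
  rw [this, ZMod.stdAddChar_coe, smul_eq_mul, mul_comm]
  congr 2
  push_cast
  ring

lemma fhat_conv (M : ℕ) [NeZero M] (f g : ZMod M → ℝ) (ξ : ZMod M) :
    fhat M (conv M f g) ξ = fhat M f ξ * fhat M g ξ := by
  simp only [fhat_eq_dft, ZMod.dft_apply, smul_eq_mul]
  rw [Finset.sum_mul]
  simp only [conv, Complex.ofReal_sum, Finset.mul_sum]
  rw [Finset.sum_comm]
  refine Finset.sum_congr rfl fun y _ => ?_
  refine Fintype.sum_equiv (Equiv.subRight y) _ _ fun x => ?_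
  have : -(x * ξ) = -(y * ξ) + -((x - y) * ξ) := by ring
  rw [this, AddChar.map_add_eq_mul]
  simp only [Equiv.subRight_apply]
  push_cast
  ring

/-- `f * g = 1` can be read off from `f̂ * ĝ = M • 1_{0}`, the transform of the constant `1`. -/
lemma conv_eq_one (M : ℕ) [NeZero M] (f g : ZMod M → ℝ)
    (h : ∀ ξ : ZMod M, fhat M f ξ * fhat M g ξ = if M ∣ ξ.val then (M : ℂ) else 0) (x : ZMod M) :
    conv M f g x = 1 := by
  have h1 : ∀ ξ, fhat M (conv M f g) ξ = fhat M (fun z => if 1 ∣ z.val then 1 else 0) ξ := by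
    intro ξ
    rw [fhat_conv, h, fhat_indicator M 1 M (by simp)]
  simp only [fhat_eq_dft] at h1
  have h2 := congrFun (ZMod.dft.injective (funext h1)) x
  simpa using h2

/-! ### Divisibility by cyclotomic polynomials, (T1) and (T2) for tables -/

section TwoPrimes

variable {p q M : ℕ}

lemma gcd_eq_mul_pow (hp : p.Prime) (hq : q.Prime) (hM : M = p ^ 4 * q ^ 2) (n : ℕ) :
    ∃ a b, a ≤ 4 ∧ b ≤ 2 ∧ Nat.gcd n M = p ^ a * q ^ b := by
  obtain ⟨x, y, hx, hy, hxy⟩ := (Nat.dvd_mul).1 (hM ▸ Nat.gcd_dvd_right n M)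
  obtain ⟨a, ha, rfl⟩ := (Nat.dvd_prime_pow hp).1 hx
  obtain ⟨b, hb, rfl⟩ := (Nat.dvd_prime_pow hq).1 hy
  exact ⟨a, b, ha, hb, by rw [hM, hxy]⟩

lemma factorization_mul_pow (hp : p.Prime) (hq : q.Prime) (hpq : p ≠ q) (a b : ℕ) :
    (p ^ a * q ^ b).factorization p = a ∧ (p ^ a * q ^ b).factorization q = b := by
  rw [Nat.factorization_mul (pow_ne_zero _ hp.ne_zero) (pow_ne_zero _ hq.ne_zero)]
  simp [hp.factorization, hq.factorization, hpq, hpq.symm]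

lemma mul_pow_dvd_iff (hp : p.Prime) (hq : q.Prime) (hpq : p ≠ q) (hM : M = p ^ 4 * q ^ 2)
    {n a b i j : ℕ} (h : Nat.gcd n M = p ^ a * q ^ b) (hi : i ≤ 4) (hj : j ≤ 2) :
    p ^ i * q ^ j ∣ n ↔ i ≤ a ∧ j ≤ b := by
  have h1 : p ^ i * q ^ j ∣ n ↔ p ^ i * q ^ j ∣ p ^ a * q ^ b := by
    rw [← h, Nat.dvd_gcd_iff, and_iff_left]
    rw [hM]
    exact mul_dvd_mul (pow_dvd_pow _ hi) (pow_dvd_pow _ hj)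
  rw [h1]
  constructor
  · intro h2
    have hne : ∀ a b, p ^ a * q ^ b ≠ 0 := fun a b =>
      mul_ne_zero (pow_ne_zero _ hp.ne_zero) (pow_ne_zero _ hq.ne_zero)
    have h3 := (Nat.factorization_le_iff_dvd (hne i j) (hne a b)).2 h2
    have h4 := h3 p
    have h5 := h3 q
    rw [(factorization_mul_pow hp hq hpq _ _).1, (factorization_mul_pow hp hq hpq _ _).1] at h4
    rw [(factorization_mul_pow hp hq hpq _ _).2, (factorization_mul_pow hp hq hpq _ _).2] at h5
    exact ⟨h4, h5⟩
  · rintro ⟨h2, h3⟩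
    exact mul_dvd_mul (pow_dvd_pow _ h2) (pow_dvd_pow _ h3)

variable [NeZero M]

lemma tab_eq (hp : p.Prime) (hq : q.Prime) (hpq : p ≠ q) (t : ℕ → ℕ → ℝ) {z : ZMod M} {a b : ℕ}
    (h : Nat.gcd z.val M = p ^ a * q ^ b) : tab p q M t z = t a b := by
  have := factorization_mul_pow hp hq hpq a b
  rw [tab, h, this.1, this.2]

lemma fhat_sum_smul {ι : Type*} (s : Finset ι) (c : ι → ℝ) (F : ι → ZMod M → ℝ) (ξ : ZMod M) :
    fhat M (fun z => ∑ i ∈ s, c i * F i z) ξ = ∑ i ∈ s, (c i : ℂ) * fhat M (F i) ξ := by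
  unfold fhat
  simp only [Complex.ofReal_sum, Finset.sum_mul, Finset.mul_sum]
  rw [Finset.sum_comm]
  refine Finset.sum_congr rfl fun i _ => Finset.sum_congr rfl fun z _ => ?_
  push_cast
  ring

lemma fhat_tab (hp : p.Prime) (hq : q.Prime) (hpq : p ≠ q) (hM : M = p ^ 4 * q ^ 2)
    {t h : ℕ → ℕ → ℝ} (hth : IsHatTable p q t h) (ξ : ZMod M) :
    fhat M (tab p q M t) ξ = (tab p q M h ξ : ℂ) := by
  have hexpand : tab p q M t = fun z => ∑ x ∈ range 5 ×ˢ range 3,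
      mixedDiff t x.1 x.2 * (if p ^ x.1 * q ^ x.2 ∣ z.val then 1 else 0) := by
    funext z
    obtain ⟨a, b, ha, hb, hab⟩ := gcd_eq_mul_pow hp hq hM z.val
    rw [tab_eq hp hq hpq t hab, sum_mixedDiff t ha hb, ← Finset.sum_product']
    refine Finset.sum_congr rfl fun x hx => ?_
    simp only [Finset.mem_product, Finset.mem_range] at hx
    simp only [mul_pow_dvd_iff hp hq hpq hM hab (Nat.lt_succ_iff.1 hx.1) (Nat.lt_succ_iff.1 hx.2),
      mul_ite, mul_one, mul_zero]
  obtain ⟨a, b, ha, hb, hab⟩ := gcd_eq_mul_pow hp hq hM ξ.val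
  rw [hexpand, fhat_sum_smul, tab_eq hp hq hpq h hab, ← hth a ha b hb, ← Finset.sum_product',
    Complex.ofReal_sum]
  refine Finset.sum_congr rfl fun x hx => ?_
  simp only [Finset.mem_product, Finset.mem_range] at hx
  obtain ⟨i, j⟩ := x
  have hi : i ≤ 4 := Nat.lt_succ_iff.1 hx.1
  have hj : j ≤ 2 := Nat.lt_succ_iff.1 hx.2
  have hsplit : M = (p ^ i * q ^ j) * (p ^ (4 - i) * q ^ (2 - j)) := by
    rw [hM, mul_mul_mul_comm, ← pow_add, ← pow_add, Nat.add_sub_cancel' hi, Nat.add_sub_cancel' hj]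
  rw [fhat_indicator M _ _ hsplit]
  simp only [mul_pow_dvd_iff hp hq hpq hM hab (Nat.sub_le 4 i) (Nat.sub_le 2 j)]
  split_ifs <;> simp

lemma isStepFun_tab (t : ℕ → ℕ → ℝ) : IsStepFun M (tab p q M t) := by
  intro z w h
  rw [tab, tab, h]

lemma cycDvd_tab_iff (hp : p.Prime) (hq : q.Prime) (hpq : p ≠ q) (hM : M = p ^ 4 * q ^ 2)
    {t h : ℕ → ℕ → ℝ} (hth : IsHatTable p q t h) {i j : ℕ} (hi : i ≤ 4) (hj : j ≤ 2) :
    cycDvd M (tab p q M t) (p ^ i * q ^ j) ↔ h (4 - i) (2 - j) = 0 := by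
  have hpos : 0 < p ^ i * q ^ j := Nat.mul_pos (pow_pos hp.pos _) (pow_pos hq.pos _)
  have hsplit : M = (p ^ i * q ^ j) * (p ^ (4 - i) * q ^ (2 - j)) := by
    rw [hM, mul_mul_mul_comm, ← pow_add, ← pow_add, Nat.add_sub_cancel' hi, Nat.add_sub_cancel' hj]
  have hdiv : M / (p ^ i * q ^ j) = p ^ (4 - i) * q ^ (2 - j) := by
    rw [hsplit]; exact Nat.mul_div_cancel_left _ hpos
  unfold cycDvd
  rw [hdiv]
  constructor
  · intro H
    have hg : Nat.gcd ((p ^ (4 - i) * q ^ (2 - j) : ℕ) : ZMod M).val M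
        = p ^ (4 - i) * q ^ (2 - j) := by
      rw [ZMod.val_natCast, ← Nat.gcd_rec, Nat.gcd_comm]
      exact Nat.gcd_eq_left (Dvd.intro_left _ hsplit.symm)
    have := H _ hg
    rw [fhat_tab hp hq hpq hM hth, tab_eq hp hq hpq h hg] at this
    exact_mod_cast this
  · intro H ξ hξ
    rw [fhat_tab hp hq hpq hM hth, tab_eq hp hq hpq h hξ, H, Complex.ofReal_zero]

/-- `Φ_{p ^ i}` is tested on the class `(4 - i, 2)` and `Φ_{q ^ j}` on the class `(4, 2 - j)`. -/
lemma mem_SF_tab_iff (hp : p.Prime) (hq : q.Prime) (hpq : p ≠ q) (hM : M = p ^ 4 * q ^ 2)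
    {t h : ℕ → ℕ → ℝ} (hth : IsHatTable p q t h) (s : ℕ) :
    s ∈ SF M (tab p q M t) ↔ (∃ i, 1 ≤ i ∧ i ≤ 4 ∧ h (4 - i) 2 = 0 ∧ s = p ^ i) ∨
      (∃ j, 1 ≤ j ∧ j ≤ 2 ∧ h 4 (2 - j) = 0 ∧ s = q ^ j) := by
  have hM0 : M ≠ 0 := NeZero.ne M
  have hcp : ∀ i ≤ 4, (cycDvd M (tab p q M t) (p ^ i) ↔ h (4 - i) 2 = 0) := by
    intro i hi
    simpa using cycDvd_tab_iff hp hq hpq hM hth hi (Nat.zero_le 2)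
  have hcq : ∀ j ≤ 2, (cycDvd M (tab p q M t) (q ^ j) ↔ h 4 (2 - j) = 0) := by
    intro j hj
    simpa using cycDvd_tab_iff hp hq hpq hM hth (Nat.zero_le 4) hj
  simp only [SF, Finset.mem_filter, Nat.mem_divisors]
  constructor
  · rintro ⟨⟨hdvd, -⟩, hpp, hc⟩
    have hcop : Nat.Coprime (p ^ 4) (q ^ 2) :=
      Nat.Coprime.pow _ _ ((Nat.coprime_primes hp hq).2 hpq)
    rw [hM, hcop.isPrimePow_dvd_mul hpp] at hdvd
    rcases hdvd with hd | hd
    · obtain ⟨i, hi, rfl⟩ := (Nat.dvd_prime_pow hp).1 hd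
      refine Or.inl ⟨i, ?_, hi, (hcp i hi).1 hc, rfl⟩
      rcases i with _ | i
      · exact absurd hpp (by simpa using not_isPrimePow_one)
      · omega
    · obtain ⟨j, hj, rfl⟩ := (Nat.dvd_prime_pow hq).1 hd
      refine Or.inr ⟨j, ?_, hj, (hcq j hj).1 hc, rfl⟩
      rcases j with _ | j
      · exact absurd hpp (by simpa using not_isPrimePow_one)
      · omega
  · rintro (⟨i, hi1, hi, h0, rfl⟩ | ⟨j, hj1, hj, h0, rfl⟩)
    · refine ⟨⟨?_, hM0⟩, hp.isPrimePow.pow (by omega), (hcp i hi).2 h0⟩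
      rw [hM]; exact Dvd.dvd.mul_right (pow_dvd_pow _ hi) _
    · refine ⟨⟨?_, hM0⟩, hq.isPrimePow.pow (by omega), (hcq j hj).2 h0⟩
      rw [hM]; exact Dvd.dvd.mul_left (pow_dvd_pow _ hj) _

lemma sum_tab (hp : p.Prime) (hq : q.Prime) (hpq : p ≠ q) (hM : M = p ^ 4 * q ^ 2)
    {t h : ℕ → ℕ → ℝ} (hth : IsHatTable p q t h) : ∑ z, tab p q M t z = h 4 2 := by
  have h0 : Nat.gcd (0 : ZMod M).val M = p ^ 4 * q ^ 2 := by simp [hM]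
  have h1 := fhat_tab hp hq hpq hM hth 0
  rw [tab_eq hp hq hpq h h0] at h1
  simp only [fhat, ZMod.val_zero, Nat.cast_zero, mul_zero, zero_div, Complex.exp_zero,
    mul_one] at h1
  exact_mod_cast h1

/-- If `S_F` consists of `p ^ i₁`, `p ^ i₂` and `q ^ j`, then (T1) says that `F` has mass
`p ^ 2 * q`. -/
lemma satT1_tab (hp : p.Prime) (hq : q.Prime) (hpq : p ≠ q) (hM : M = p ^ 4 * q ^ 2)
    {t h : ℕ → ℕ → ℝ} (hth : IsHatTable p q t h) {i₁ i₂ j : ℕ} (hi₁ : 1 ≤ i₁) (hi₂ : 1 ≤ i₂)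
    (hj : 1 ≤ j) (hi : i₁ ≠ i₂) (hSF : SF M (tab p q M t) = {p ^ i₁, p ^ i₂, q ^ j})
    (hsum : h 4 2 = (p : ℝ) ^ 2 * q) : satT1 M (tab p q M t) := by
  have hne : ∀ i, 1 ≤ i → p ^ i ≠ q ^ j := by
    intro i hi h
    have h1 : p ∣ q ^ j := h ▸ dvd_pow_self p (by omega)
    exact hpq ((Nat.prime_dvd_prime_iff_eq hp hq).1 (hp.dvd_of_dvd_pow h1))
  have hne' : p ^ i₁ ≠ p ^ i₂ := fun h => hi (Nat.pow_right_injective hp.two_le h)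
  rw [satT1, sum_tab hp hq hpq hM hth, hsum, hSF, Finset.prod_insert, Finset.prod_insert,
    Finset.prod_singleton, hp.pow_minFac (by omega), hp.pow_minFac (by omega),
    hq.pow_minFac (by omega)]
  · ring
  · simpa using hne i₂ hi₂
  · simpa using ⟨hne', hne i₁ hi₁⟩

lemma not_satT2_tab (hp : p.Prime) (hq : q.Prime) (hpq : p ≠ q) (hM : M = p ^ 4 * q ^ 2)
    {t h : ℕ → ℕ → ℝ} (hth : IsHatTable p q t h) {i j : ℕ} (hi1 : 1 ≤ i) (hj1 : 1 ≤ j)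
    (hi : i ≤ 4) (hj : j ≤ 2) (h1 : p ^ i ∈ SF M (tab p q M t)) (h2 : q ^ j ∈ SF M (tab p q M t))
    (h3 : h (4 - i) (2 - j) ≠ 0) : ¬ satT2 M (tab p q M t) := by
  intro H
  have hmp : (p ^ i).minFac = p := hp.pow_minFac (by omega)
  have hmq : (q ^ j).minFac = q := hq.pow_minFac (by omega)
  have hne : p ^ i ≠ q ^ j := fun h => hpq (by rw [← hmp, h, hmq])
  have h4 := H {p ^ i, q ^ j} (by simp) (by simp [Finset.insert_subset_iff, h1, h2]) (by
    intro s hs s' hs' hss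
    simp only [Finset.mem_insert, Finset.mem_singleton] at hs hs'
    rcases hs with rfl | rfl <;> rcases hs' with rfl | rfl <;>
      simp_all [hpq.symm])
  rw [Finset.prod_pair hne] at h4
  exact h3 ((cycDvd_tab_iff hp hq hpq hM hth hi hj).1 h4)

end TwoPrimes

/-! ### The two functions -/

/-- The values of `f` on step classes: `f(z) = fTab p q a b` when `gcd(z, M) = p ^ a * q ^ b`. -/
noncomputable def fTab (p q : ℝ) : ℕ → ℕ → ℝ
  | 0, 0 => 1 / (p ^ 2 * (q - 1))
  | 1, 1 => (p - 1) / (p ^ 2 * (q - 1))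
  | 1, 2 => (p - 1) / (p ^ 2 * (q - 1))
  | 2, 0 => (q - p) / (p * q * (q - 1))
  | 3, 0 => (q - p) / (p * q * (q - 1))
  | 4, 0 => (q - p) / (p * q * (q - 1))
  | 2, 2 => (q - p) / (p * (q - 1))
  | 3, 1 => 1 / (q - 1)
  | 4, 2 => 1
  | _, _ => 0

/-- The values of the Fourier transform of `f` on step classes. -/
noncomputable def fHat (p q : ℝ) : ℕ → ℕ → ℝ
  | 4, 2 => p ^ 2 * q
  | 2, 2 => p * q * (q - p) / (q - 1)
  | 1, 2 => q * (p - 1) / (q - 1)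
  | 4, 0 => p * (q - p) / (q - 1)
  | 3, 0 => p * (q - p) / (q - 1)
  | 2, 0 => p * (q - p) / (q - 1)
  | 3, 1 => p ^ 2 * q / (q - 1)
  | 1, 1 => q * (p - 1) / (q - 1)
  | 0, 0 => q / (q - 1)
  | _, _ => 0

/-- The common denominator of the values of `g`. -/
def gDen (p q : ℝ) : ℝ := q * (p - 1) + p * (q - p)

/-- The values of `g` on step classes. -/
noncomputable def gTab (p q : ℝ) : ℕ → ℕ → ℝ
  | 0, 1 => (q - p) / (p * gDen p q)
  | 0, 2 => (q - p) / (p * gDen p q)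
  | 1, 0 => 1 / gDen p q
  | 2, 1 => q / gDen p q
  | 3, 2 => q * (p - 1) / gDen p q
  | 4, 1 => p * (q - p) / gDen p q
  | 4, 2 => 1
  | _, _ => 0

/-- The values of the Fourier transform of `g` on step classes. -/
noncomputable def gHat (p q : ℝ) : ℕ → ℕ → ℝ
  | 4, 2 => p ^ 2 * q
  | 3, 2 => p ^ 2 * q ^ 2 * (p - 1) / gDen p q
  | 0, 2 => p * q * (q - p) / gDen p q
  | 0, 1 => p * q * (q - p) / gDen p q
  | 4, 1 => p ^ 3 * q * (q - p) / gDen p q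
  | 1, 0 => p ^ 2 * q / gDen p q
  | 2, 1 => p ^ 2 * q ^ 2 / gDen p q
  | _, _ => 0

lemma gDen_pos {p q : ℝ} (hp : 1 < p) (hpq : p < q) : 0 < gDen p q := by
  have h1 : 0 < p - 1 := by linarith
  have h2 : 0 < q - p := by linarith
  have h3 : 0 < p := by linarith
  have h4 : 0 < q := by linarith
  unfold gDen
  positivity

set_option maxHeartbeats 4000000 in
lemma fTab_isHatTable {p q : ℕ} (hp : 1 < p) (hpq : p < q) :
    IsHatTable p q (fTab p q) (fHat p q) := by
  have h0 : (p : ℝ) ≠ 0 := by positivity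
  have h1 : (q : ℝ) ≠ 0 := by have : 0 < q := by omega
                              positivity
  have h2 : (q : ℝ) - 1 ≠ 0 := by
    have : (1 : ℝ) < q := by exact_mod_cast hp.trans hpq
    linarith
  intro a ha b hb
  interval_cases a <;> interval_cases b <;>
    simp [Finset.sum_range_succ, mixedDiff, fTab, fHat] <;> field_simp <;> ring

set_option maxHeartbeats 4000000 in
lemma gTab_isHatTable {p q : ℕ} (hp : 1 < p) (hpq : p < q) :
    IsHatTable p q (gTab p q) (gHat p q) := by
  have h0 : (p : ℝ) ≠ 0 := by positivity
  have h2 : gDen p q ≠ 0 := (gDen_pos (by exact_mod_cast hp) (by exact_mod_cast hpq)).ne'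
  intro a ha b hb
  interval_cases a <;> interval_cases b <;>
    simp [Finset.sum_range_succ, mixedDiff, gTab, gHat] <;> field_simp <;>
    simp only [gDen] <;> ring

lemma tables_nonneg {p q : ℝ} (hp : 1 < p) (hpq : p < q) (a b : ℕ) :
    0 ≤ fTab p q a b ∧ 0 ≤ fHat p q a b ∧ 0 ≤ gTab p q a b ∧ 0 ≤ gHat p q a b := by
  have h1 : 0 < p - 1 := by linarith
  have h2 : 0 < q - p := by linarith
  have h3 : 0 < p := by linarith
  have h4 : 0 < q := by linarith
  have h5 : 0 < q - 1 := by linarith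
  have h6 := gDen_pos hp hpq
  refine ⟨?_, ?_, ?_, ?_⟩
  · unfold fTab; split <;> positivity
  · unfold fHat; split <;> positivity
  · unfold gTab; split <;> positivity
  · unfold gHat; split <;> positivity

/-- For primes `p < q < p^2` and `M = p^4 q^2`, there is a functional
pd-tiling `(f, g)` of `ℤ_M` by step functions whose mask polynomials satisfy (T1)
but neither satisfies (T2). -/
theorem statement0 (p q : ℕ) (hp : p.Prime) (hq : q.Prime)
    (hpq : p < q) (hqp : q < p ^ 2) (M : ℕ) [NeZero M] (hM : M = p ^ 4 * q ^ 2) :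
    ∃ f g : ZMod M → ℝ,
      f 0 = 1 ∧ g 0 = 1 ∧
      (∀ z, 0 ≤ f z) ∧ (∀ z, 0 ≤ g z) ∧
      (∀ ξ, (fhat M f ξ).im = 0 ∧ 0 ≤ (fhat M f ξ).re) ∧
      (∀ ξ, (fhat M g ξ).im = 0 ∧ 0 ≤ (fhat M g ξ).re) ∧
      (∀ x, conv M f g x = 1) ∧
      IsStepFun M f ∧ IsStepFun M g ∧
      satT1 M f ∧ satT1 M g ∧
      ¬ satT2 M f ∧ ¬ satT2 M g := by
  have hp1 : (1 : ℝ) < p := by exact_mod_cast hp.one_lt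
  have hpqR : (p : ℝ) < q := by exact_mod_cast hpq
  have hne : p ≠ q := hpq.ne
  have hf := fTab_isHatTable hp.one_lt hpq
  have hg := gTab_isHatTable hp.one_lt hpq
  have hp0 : (p : ℝ) ≠ 0 := by linarith
  have hq0 : (q : ℝ) ≠ 0 := by linarith
  have hp1' : (p : ℝ) - 1 ≠ 0 := by linarith
  have hq1 : (q : ℝ) - 1 ≠ 0 := by linarith
  have hqp' : (q : ℝ) - p ≠ 0 := by linarith
  have hD : gDen p q ≠ 0 := (gDen_pos hp1 hpqR).ne'
  have hnn := tables_nonneg hp1 hpqR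
  have h0 : Nat.gcd (0 : ZMod M).val M = p ^ 4 * q ^ 2 := by simp [hM]
  have hSF : SF M (tab p q M (fTab p q)) = {p ^ 1, p ^ 4, q ^ 1} := by
    ext s
    rw [mem_SF_tab_iff hp hq hne hM hf]
    simp only [Finset.mem_insert, Finset.mem_singleton]
    constructor
    · rintro (⟨i, hi1, hi, hz, rfl⟩ | ⟨j, hj1, hj, hz, rfl⟩)
      · interval_cases i <;> simp_all [fHat]
      · interval_cases j <;> simp_all [fHat]
    · rintro (rfl | rfl | rfl)
      · exact Or.inl ⟨1, by simp [fHat]⟩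
      · exact Or.inl ⟨4, by simp [fHat]⟩
      · exact Or.inr ⟨1, by simp [fHat]⟩
  have hSG : SF M (tab p q M (gTab p q)) = {p ^ 2, p ^ 3, q ^ 2} := by
    ext s
    rw [mem_SF_tab_iff hp hq hne hM hg]
    simp only [Finset.mem_insert, Finset.mem_singleton]
    constructor
    · rintro (⟨i, hi1, hi, hz, rfl⟩ | ⟨j, hj1, hj, hz, rfl⟩)
      · interval_cases i <;> simp_all [gHat]
      · interval_cases j <;> simp_all [gHat]
    · rintro (rfl | rfl | rfl)
      · exact Or.inl ⟨2, by simp [gHat]⟩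
      · exact Or.inl ⟨3, by simp [gHat]⟩
      · exact Or.inr ⟨2, by simp [gHat]⟩
  refine ⟨tab p q M (fTab p q), tab p q M (gTab p q), ?_, ?_, fun z => (hnn _ _).1,
    fun z => (hnn _ _).2.2.1, ?_, ?_, ?_, isStepFun_tab _, isStepFun_tab _, ?_, ?_, ?_, ?_⟩
  · rw [tab_eq hp hq hne _ h0, fTab]
  · rw [tab_eq hp hq hne _ h0, gTab]
  · intro ξ
    rw [fhat_tab hp hq hne hM hf, Complex.ofReal_im, Complex.ofReal_re]
    exact ⟨rfl, (hnn _ _).2.1⟩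
  · intro ξ
    rw [fhat_tab hp hq hne hM hg, Complex.ofReal_im, Complex.ofReal_re]
    exact ⟨rfl, (hnn _ _).2.2.2⟩
  · refine conv_eq_one M _ _ fun ξ => ?_
    obtain ⟨a, b, ha, hb, hab⟩ := gcd_eq_mul_pow hp hq hM ξ.val
    have hdvd : M ∣ ξ.val ↔ 4 ≤ a ∧ 2 ≤ b := by
      have h := mul_pow_dvd_iff hp hq hne hM hab (le_refl 4) (le_refl 2)
      rwa [← hM] at h
    rw [fhat_tab hp hq hne hM hf, fhat_tab hp hq hne hM hg, tab_eq hp hq hne _ hab,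
      tab_eq hp hq hne _ hab]
    simp only [hdvd]
    have hMC : (M : ℂ) = (p : ℂ) ^ 4 * (q : ℂ) ^ 2 := by rw [hM]; push_cast; rfl
    rw [hMC]
    -- Off the class of `0`, one of the two transforms vanishes.
    interval_cases a <;> interval_cases b <;> simp [fHat, gHat]
    ring
  · exact satT1_tab hp hq hne hM hf (by norm_num) (by norm_num) le_rfl (by norm_num) hSF
      (by simp [fHat])
  · exact satT1_tab hp hq hne hM hg (by norm_num) (by norm_num) (by norm_num) (by norm_num) hSG
      (by simp [gHat])
  -- `Φ_p` and `Φ_q` divide `F`, but `Φ_{pq}` does not.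
  · refine not_satT2_tab hp hq hne hM hf (i := 1) (j := 1) le_rfl le_rfl (by norm_num)
      (by norm_num) (by simp [hSF]) (by simp [hSF]) ?_
    simp [fHat, hp0, hq0, hq1]
  -- `Φ_{p³}` and `Φ_{q²}` divide `G`, but `Φ_{p³q²}` does not.
  · refine not_satT2_tab hp hq hne hM hg (i := 3) (j := 2) (by norm_num) (by norm_num) (by norm_num)
      (by norm_num) (by simp [hSG]) (by simp [hSG]) ?_
    simp [gHat, hp0, hq0, hD]
end

section
/- Let p and q be prime numbers with p < q < p², and set M = p⁴q². Then there exist step functions f, g : ℤ_M → ℝ such that: f(0) = g(0) = 1; f ≥ 0 and g ≥ 0; f̂ = p²q·f and ĝ = p²q·g (f and g are eigenfunctions of the Fourier transform with eigenvalue p²q = √M); the supports of f and g intersect only at 0; f * g = 1_{ℤ_M}; the mask polynomials F and G both satisfy condition (T1); and neither F nor G satisfies condition (T2). -/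
/-!
Index the step classes of `ℤ_M`, `M = p^4 q^2`, by the additive order `p^k q^l` of their elements.
A step function is a combination `∑ c_{a,b} 1_{p^a q^b ℤ_M}` with `0 ≤ a ≤ 4`, `0 ≤ b ≤ 2`, and the
Fourier transform maps `1_{dℤ_M}` to `(M/d) 1_{(M/d)ℤ_M}` (`fourier_indicator`). Hence it is an
eigenfunction with eigenvalue `√M = p^2 q` exactly when
`c_{4-a,2-b} p^a q^b = p^2 q c_{a,b}` (`fhat_stepFn`). The functions `f` and `g` are explicit
nonnegative solutions (`fval`, `gval`) of these linear equations whose supports meet only at `0`;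
the condition `q < p^2` is what makes `g` nonnegative on elements of order `p^3 q`.

For such eigenfunctions `f * g` is the Fourier transform of `f g`, which is the indicator function
of `0` (`conv_eq_one`), and `Φ_{p^k q^l}` divides the mask polynomial exactly when the function
vanishes on elements of order `p^k q^l` (`cycDvd_iff`). So (T1) and (T2) are read off the tables:
`S_F = {p^2, p^3, q^2}` and `S_G = {p, p^4, q}` both have product of primes `p^2 q = √M`, which is
the mass of `f` and of `g`, while `f` does not vanish at order `p^3 q^2`, nor `g` at order `p q`.
-/

open Finset

/-! ### Step functions and their divisor coefficients -/

/-- The step function on `ZMod M`, `M = p^4 q^2`, whose value on the elements of additive order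
`p^k q^l` (that is, on the `z` with `gcd(z, M) = p^(4-k) q^(2-l)`) is `F k l`. -/
noncomputable def stepFn (p q M : ℕ) [NeZero M] (F : ℕ → ℕ → ℝ) (z : ZMod M) : ℝ :=
  F (4 - (Nat.gcd z.val M).factorization p) (2 - (Nat.gcd z.val M).factorization q)

/-- The coefficient of the indicator function of `p^a q^b ℤ_M` in `stepFn p q M F`, obtained by
Möbius inversion over the grid of divisors `p^a q^b`. -/
def coef (F : ℕ → ℕ → ℝ) (a b : ℕ) : ℝ :=
  F (4 - a) (2 - b) - (if a = 0 then 0 else F (4 - (a - 1)) (2 - b))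
    - (if b = 0 then 0 else F (4 - a) (2 - (b - 1)))
    + (if a = 0 ∨ b = 0 then 0 else F (4 - (a - 1)) (2 - (b - 1)))

/-! ### Fourier transform and convolution on `ℤ_M` -/

lemma sum_zmod_eq (M : ℕ) [NeZero M] (h : ℕ → ℂ) :
    ∑ z : ZMod M, h z.val = ∑ n ∈ range M, h n := by
  refine Finset.sum_bij' (fun z _ => z.val) (fun n _ => (n : ZMod M)) ?_ ?_ ?_ ?_ ?_
  · intro z _; simpa using ZMod.val_lt z
  · intro n _; simp
  · intro z _; simp
  · intro n hn; exact ZMod.val_cast_of_lt (by simpa using hn)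
  · intro z _; rfl

lemma geom_exp (e ξ : ℕ) (he : 0 < e) :
    ∑ k ∈ range e, Complex.exp (-2 * Real.pi * Complex.I * ((k : ℂ) * (ξ : ℂ)) / (e : ℂ))
      = if e ∣ ξ then (e : ℂ) else 0 := by
  have he0 : (e : ℂ) ≠ 0 := by exact_mod_cast he.ne'
  set ζ := Complex.exp (2 * Real.pi * Complex.I / e) with hζ
  have hprim : IsPrimitiveRoot ζ e := Complex.isPrimitiveRoot_exp e he.ne'
  have hterm : ∀ k ∈ range e,
      Complex.exp (-2 * Real.pi * Complex.I * ((k : ℂ) * (ξ : ℂ)) / (e : ℂ)) = (ζ⁻¹ ^ ξ) ^ k := by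
    intro k _
    rw [hζ, ← Complex.exp_neg, ← Complex.exp_nat_mul, ← Complex.exp_nat_mul]
    congr 1
    ring
  rw [Finset.sum_congr rfl hterm]
  have hinv := hprim.inv
  split_ifs with h
  · rw [(hinv.pow_eq_one_iff_dvd ξ).2 h]; simp
  · have hne : ζ⁻¹ ^ ξ ≠ 1 := fun h1 => h ((hinv.pow_eq_one_iff_dvd ξ).1 h1)
    have hg := mul_geom_sum (ζ⁻¹ ^ ξ) e
    rw [← pow_mul, mul_comm ξ e, pow_mul, hinv.pow_eq_one, one_pow, sub_self] at hg
    exact (mul_eq_zero.1 hg).resolve_left (sub_ne_zero.2 hne)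

/-- The Fourier transform of the indicator function of the subgroup `dℤ_M` is `e = M / d` times
the indicator function of its annihilator `eℤ_M`. -/
lemma fourier_indicator (M d e : ℕ) [NeZero M] (hM : M = d * e) (ξ : ZMod M) :
    ∑ z : ZMod M, (if d ∣ z.val then (1 : ℂ) else 0) *
      Complex.exp (-2 * Real.pi * Complex.I * ((z.val : ℂ) * (ξ.val : ℂ)) / (M : ℂ))
      = if e ∣ ξ.val then (e : ℂ) else 0 := by
  have hM0 : M ≠ 0 := NeZero.ne M
  have hd : 0 < d := Nat.pos_of_ne_zero (by rintro rfl; simp at hM; exact hM0 hM)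
  have he : 0 < e := Nat.pos_of_ne_zero (by rintro rfl; simp at hM; exact hM0 hM)
  rw [sum_zmod_eq M (fun n => (if d ∣ n then (1 : ℂ) else 0) *
      Complex.exp (-2 * Real.pi * Complex.I * ((n : ℂ) * (ξ.val : ℂ)) / (M : ℂ))),
    ← geom_exp e ξ.val he]
  simp only [ite_mul, one_mul, zero_mul]
  rw [← Finset.sum_filter]
  symm
  refine Finset.sum_bij' (fun k _ => d * k) (fun n _ => n / d) ?_ ?_ ?_ ?_ ?_
  · intro k hk
    simp only [mem_filter, mem_range] at hk ⊢
    exact ⟨by rw [hM]; exact Nat.mul_lt_mul_of_pos_left hk hd, dvd_mul_right _ _⟩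
  · intro n hn
    simp only [mem_filter, mem_range] at hn ⊢
    exact Nat.div_lt_of_lt_mul (hM ▸ hn.1)
  · intro k _
    exact Nat.mul_div_cancel_left k hd
  · intro n hn
    exact Nat.mul_div_cancel' (mem_filter.1 hn).2
  · intro k _
    congr 1
    have : (d : ℂ) ≠ 0 := by exact_mod_cast hd.ne'
    have : (e : ℂ) ≠ 0 := by exact_mod_cast he.ne'
    have hMC : (M : ℂ) = d * e := by exact_mod_cast hM
    rw [hMC]
    push_cast
    field_simp

lemma exp_eq_stdAddChar (M : ℕ) [NeZero M] (z ξ : ZMod M) :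
    Complex.exp (-2 * Real.pi * Complex.I * ((z.val : ℂ) * (ξ.val : ℂ)) / (M : ℂ))
      = ZMod.stdAddChar (-(z * ξ)) := by
  have h : -(z * ξ) = (((-((z.val : ℤ) * (ξ.val : ℤ))) : ℤ) : ZMod M) := by
    push_cast
    simp
  rw [h, ZMod.stdAddChar_coe]
  congr 1
  push_cast
  ring

/-- For two Fourier eigenfunctions with eigenvalue `√M` the convolution `f * g` is the Fourier
transform of the pointwise product `f g`; when the supports meet only at `0` this product is
`f 0 * g 0` times the indicator function of `0`, so the convolution is constant. -/
lemma conv_eq_one_s1 (M r : ℕ) [NeZero M] (hr : r * r = M) (f g : ZMod M → ℝ)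
    (hf : ∀ ξ, fhat M f ξ = (r : ℂ) * (f ξ : ℂ)) (hg : ∀ ξ, fhat M g ξ = (r : ℂ) * (g ξ : ℂ))
    (hf0 : f 0 = 1) (hg0 : g 0 = 1) (hd : ∀ z : ZMod M, f z ≠ 0 → g z ≠ 0 → z = 0) (x : ZMod M) :
    conv M f g x = 1 := by
  have hM0 : (M : ℂ) ≠ 0 := by exact_mod_cast NeZero.ne M
  have hrr : (r : ℂ) * r = M := by exact_mod_cast hr
  simp only [fhat, exp_eq_stdAddChar] at hf hg
  have key : (M : ℂ) * ((conv M f g x : ℝ) : ℂ) = M := by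
    unfold conv
    push_cast
    calc (M : ℂ) * ∑ y, (f y : ℂ) * (g (x - y) : ℂ)
        = ∑ y, ((r : ℂ) * f y) * ((r : ℂ) * g (x - y)) := by
          rw [Finset.mul_sum]
          refine Finset.sum_congr rfl fun y _ => ?_
          rw [← hrr]; ring
      _ = ∑ y, ∑ z, ∑ w, ((f z : ℂ) * g w * ZMod.stdAddChar (-(w * x)))
            * ZMod.stdAddChar (y * (w - z)) := by
          refine Finset.sum_congr rfl fun y _ => ?_
          rw [← hf, ← hg, Finset.sum_mul_sum]
          refine Finset.sum_congr rfl fun z _ => Finset.sum_congr rfl fun w _ => ?_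
          have : (ZMod.stdAddChar (-(z * y)) : ℂ) * ZMod.stdAddChar (-(w * (x - y)))
              = ZMod.stdAddChar (-(w * x)) * ZMod.stdAddChar (y * (w - z)) := by
            rw [← AddChar.map_add_eq_mul, ← AddChar.map_add_eq_mul]
            congr 1
            ring
          linear_combination (f z : ℂ) * g w * this
      _ = ∑ z, ∑ w, ((f z : ℂ) * g w * ZMod.stdAddChar (-(w * x)))
            * (if w - z = 0 then (M : ℂ) else 0) := by
          rw [Finset.sum_comm]
          refine Finset.sum_congr rfl fun z _ => ?_
          rw [Finset.sum_comm]
          refine Finset.sum_congr rfl fun w _ => ?_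
          rw [← Finset.mul_sum, AddChar.sum_mulShift _ (ZMod.isPrimitive_stdAddChar M)]
          simp [ZMod.card]
      _ = ∑ z, (f z : ℂ) * g z * ZMod.stdAddChar (-(z * x)) * M := by
          refine Finset.sum_congr rfl fun z _ => ?_
          rw [Finset.sum_eq_single z]
          · simp
          · intro w _ hw
            simp [sub_eq_zero, hw]
          · simp
      _ = M := by
          rw [Finset.sum_eq_single 0]
          · simp [hf0, hg0]
          · intro z _ hz
            by_cases h1 : f z = 0
            · simp [h1]
            · by_cases h2 : g z = 0
              · simp [h2]
              · exact absurd (hd z h1 h2) hz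
          · simp
  have h2 : ((conv M f g x : ℝ) : ℂ) = 1 := mul_left_cancel₀ hM0 (by rw [key, mul_one])
  exact_mod_cast h2

/-! ### Step classes of `ℤ_M` for `M = p^4 q^2`, and cyclotomic divisors -/

lemma gcd_form {p q M : ℕ} (hp : p.Prime) (hq : q.Prime) (hM : M = p ^ 4 * q ^ 2) (n : ℕ) :
    ∃ i j, i ≤ 4 ∧ j ≤ 2 ∧ Nat.gcd n M = p ^ i * q ^ j := by
  have h : Nat.gcd n M ∣ p ^ 4 * q ^ 2 := hM ▸ Nat.gcd_dvd_right n M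
  obtain ⟨a, b, ha, hb, hab⟩ := (Nat.dvd_mul).1 h
  obtain ⟨i, hi, rfl⟩ := (Nat.dvd_prime_pow hp).1 ha
  obtain ⟨j, hj, rfl⟩ := (Nat.dvd_prime_pow hq).1 hb
  exact ⟨i, j, hi, hj, hab.symm⟩

section Step

variable {p q M : ℕ} [NeZero M]

lemma fact_p (hp : p.Prime) (hq : q.Prime) (hne : p ≠ q) (i j : ℕ) :
    (p ^ i * q ^ j).factorization p = i := by
  rw [Nat.factorization_mul (pow_ne_zero _ hp.ne_zero) (pow_ne_zero _ hq.ne_zero)]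
  simp [hp.factorization, hq.factorization, hne.symm]

lemma fact_q (hp : p.Prime) (hq : q.Prime) (hne : p ≠ q) (i j : ℕ) :
    (p ^ i * q ^ j).factorization q = j := by
  rw [mul_comm]; exact fact_p hq hp hne.symm j i

lemma stepFn_eq (hp : p.Prime) (hq : q.Prime) (hne : p ≠ q) (F : ℕ → ℕ → ℝ) {z : ZMod M}
    {i j : ℕ} (h : Nat.gcd z.val M = p ^ i * q ^ j) : stepFn p q M F z = F (4 - i) (2 - j) := by
  simp only [stepFn, h, fact_p hp hq hne, fact_q hp hq hne]

lemma stepFn_isStepFun (F : ℕ → ℕ → ℝ) : IsStepFun M (stepFn p q M F) := by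
  intro z w h
  simp only [stepFn, h]

lemma stepFn_zero (hp : p.Prime) (hq : q.Prime) (hne : p ≠ q) (hM : M = p ^ 4 * q ^ 2)
    (F : ℕ → ℕ → ℝ) : stepFn p q M F 0 = F 0 0 := by
  rw [stepFn_eq hp hq hne F (i := 4) (j := 2) (by simpa using hM)]

lemma dvd_iff (hp : p.Prime) (hq : q.Prime) (hne : p ≠ q) (a b i j : ℕ) :
    p ^ a * q ^ b ∣ p ^ i * q ^ j ↔ a ≤ i ∧ b ≤ j := by
  constructor
  · intro h
    have h0 : p ^ i * q ^ j ≠ 0 := mul_ne_zero (pow_ne_zero _ hp.ne_zero) (pow_ne_zero _ hq.ne_zero)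
    have h1 := (Nat.factorization_le_iff_dvd (ne_zero_of_dvd_ne_zero h0 h) h0).2 h
    have hp' := h1 p
    have hq' := h1 q
    rw [fact_p hp hq hne, fact_p hp hq hne] at hp'
    rw [fact_q hp hq hne, fact_q hp hq hne] at hq'
    exact ⟨hp', hq'⟩
  · rintro ⟨h1, h2⟩
    exact mul_dvd_mul (pow_dvd_pow p h1) (pow_dvd_pow q h2)

lemma stepFn_expand (hp : p.Prime) (hq : q.Prime) (hne : p ≠ q) (hM : M = p ^ 4 * q ^ 2)
    (F : ℕ → ℕ → ℝ) (z : ZMod M) :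
    stepFn p q M F z = ∑ a ∈ range 5, ∑ b ∈ range 3,
      coef F a b * (if p ^ a * q ^ b ∣ z.val then 1 else 0) := by
  obtain ⟨i, j, hi, hj, h⟩ := gcd_form hp hq hM z.val
  rw [stepFn_eq hp hq hne F h]
  have hd : ∀ a ∈ range 5, ∀ b ∈ range 3, coef F a b * (if p ^ a * q ^ b ∣ z.val then 1 else 0)
      = coef F a b * (if a ≤ i ∧ b ≤ j then 1 else 0) := by
    intro a ha b hb
    have hab : p ^ a * q ^ b ∣ M := by
      rw [hM, dvd_iff hp hq hne]
      simp only [mem_range] at ha hb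
      omega
    have : p ^ a * q ^ b ∣ z.val ↔ a ≤ i ∧ b ≤ j := by
      rw [← dvd_iff hp hq hne, ← h, Nat.dvd_gcd_iff]
      simp [hab]
    simp only [this]
  rw [Finset.sum_congr rfl fun a ha => Finset.sum_congr rfl fun b hb => hd a ha b hb]
  interval_cases i <;> interval_cases j <;> simp [Finset.sum_range_succ, coef]

/-- The Fourier transform exchanges the indicator functions of `p^a q^b ℤ_M` and of
`p^(4-a) q^(2-b) ℤ_M` up to scaling, so being an eigenfunction is a symmetry of the
coefficients. -/
lemma fhat_stepFn (hp : p.Prime) (hq : q.Prime) (hne : p ≠ q) (hM : M = p ^ 4 * q ^ 2)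
    (F : ℕ → ℕ → ℝ)
    (hF : ∀ a ∈ range 5, ∀ b ∈ range 3,
      coef F (4 - a) (2 - b) * ((p : ℝ) ^ a * (q : ℝ) ^ b) = (p : ℝ) ^ 2 * q * coef F a b)
    (ξ : ZMod M) :
    fhat M (stepFn p q M F) ξ = ((p ^ 2 * q : ℕ) : ℂ) * (stepFn p q M F ξ : ℂ) := by
  have h1 : fhat M (stepFn p q M F) ξ = ∑ a ∈ range 5, ∑ b ∈ range 3,
      (coef F a b : ℂ) * ((p : ℂ) ^ (4 - a) * (q : ℂ) ^ (2 - b) *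
        (if p ^ (4 - a) * q ^ (2 - b) ∣ ξ.val then 1 else 0)) := by
    unfold fhat
    simp only [stepFn_expand hp hq hne hM F]
    push_cast
    simp only [Finset.sum_mul, apply_ite Complex.ofReal, Complex.ofReal_one, Complex.ofReal_zero]
    rw [Finset.sum_comm]
    refine Finset.sum_congr rfl fun a ha => ?_
    rw [Finset.sum_comm]
    refine Finset.sum_congr rfl fun b hb => ?_
    simp only [mem_range] at ha hb
    have hfac : M = (p ^ a * q ^ b) * (p ^ (4 - a) * q ^ (2 - b)) := by
      rw [mul_mul_mul_comm, ← pow_add, ← pow_add, hM]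
      congr 2 <;> omega
    have := fourier_indicator M _ _ hfac ξ
    simp only [mul_assoc, ← Finset.mul_sum] at this ⊢
    rw [this]
    split_ifs <;> simp
  rw [h1, ← Finset.sum_range_reflect, stepFn_expand hp hq hne hM F]
  push_cast
  simp only [apply_ite Complex.ofReal, Complex.ofReal_one, Complex.ofReal_zero]
  rw [Finset.mul_sum]
  refine Finset.sum_congr rfl fun a ha => ?_
  rw [← Finset.sum_range_reflect, Finset.mul_sum]
  refine Finset.sum_congr rfl fun b hb => ?_
  have e := hF a ha b hb
  simp only [mem_range] at ha hb
  have ea : 4 - (5 - 1 - a) = a := by omega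
  have eb : 2 - (3 - 1 - b) = b := by omega
  have eC : (coef F (4 - a) (2 - b) : ℂ) * ((p : ℂ) ^ a * (q : ℂ) ^ b)
      = (p : ℂ) ^ 2 * q * coef F a b := by exact_mod_cast e
  rw [ea, eb]
  show (coef F (4 - a) (2 - b) : ℂ) * _ = _
  linear_combination eC * (if p ^ a * q ^ b ∣ ξ.val then (1 : ℂ) else 0)

lemma cycDvd_iff (hp : p.Prime) (hq : q.Prime) (hne : p ≠ q) (hM : M = p ^ 4 * q ^ 2)
    (F : ℕ → ℕ → ℝ)
    (hF : ∀ ξ, fhat M (stepFn p q M F) ξ = ((p ^ 2 * q : ℕ) : ℂ) * (stepFn p q M F ξ : ℂ))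
    (k l : ℕ) (hk : k ≤ 4) (hl : l ≤ 2) :
    cycDvd M (stepFn p q M F) (p ^ k * q ^ l) ↔ F k l = 0 := by
  have hdiv : M / (p ^ k * q ^ l) = p ^ (4 - k) * q ^ (2 - l) := by
    refine Nat.div_eq_of_eq_mul_right
      (Nat.mul_pos (pow_pos hp.pos _) (pow_pos hq.pos _)) ?_
    rw [mul_mul_mul_comm, ← pow_add, ← pow_add, hM]
    congr 2 <;> omega
  have hval : ∀ ξ : ZMod M, Nat.gcd ξ.val M = p ^ (4 - k) * q ^ (2 - l) →
      stepFn p q M F ξ = F k l := by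
    intro ξ h
    rw [stepFn_eq hp hq hne F h]
    congr 1 <;> omega
  have hr : ((p ^ 2 * q : ℕ) : ℂ) ≠ 0 := by
    exact_mod_cast mul_ne_zero (pow_ne_zero _ hp.ne_zero) hq.ne_zero
  unfold cycDvd
  rw [hdiv]
  constructor
  · intro h
    have hg : Nat.gcd ((p ^ (4 - k) * q ^ (2 - l) : ℕ) : ZMod M).val M
        = p ^ (4 - k) * q ^ (2 - l) := by
      rw [ZMod.val_natCast, ← Nat.gcd_rec, Nat.gcd_comm]
      refine Nat.gcd_eq_left ?_
      rw [hM, dvd_iff hp hq hne]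
      omega
    have h0 := h _ hg
    rw [hF, hval _ hg] at h0
    exact_mod_cast (mul_eq_zero.1 h0).resolve_left hr
  · intro h ξ hξ
    rw [hF, hval ξ hξ, h]
    simp

lemma mem_SF (hp : p.Prime) (hq : q.Prime) (hne : p ≠ q) (hM : M = p ^ 4 * q ^ 2)
    (F : ℕ → ℕ → ℝ)
    (hF : ∀ ξ, fhat M (stepFn p q M F) ξ = ((p ^ 2 * q : ℕ) : ℂ) * (stepFn p q M F ξ : ℂ))
    (s : ℕ) :
    s ∈ SF M (stepFn p q M F) ↔
      (∃ k, 1 ≤ k ∧ k ≤ 4 ∧ s = p ^ k ∧ F k 0 = 0) ∨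
      (∃ l, 1 ≤ l ∧ l ≤ 2 ∧ s = q ^ l ∧ F 0 l = 0) := by
  have hc := cycDvd_iff hp hq hne hM F hF
  have hd := dvd_iff hp hq hne
  classical
  unfold SF
  rw [mem_filter, Nat.mem_divisors]
  constructor
  · rintro ⟨⟨hs, _⟩, hpp, hcyc⟩
    obtain ⟨i, j, hi, hj, h⟩ := gcd_form hp hq hM s
    rw [Nat.gcd_eq_left hs] at h
    subst h
    rw [hc i j hi hj] at hcyc
    rcases Nat.eq_zero_or_pos i with rfl | hi0
    · rcases Nat.eq_zero_or_pos j with rfl | hj0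
      · exact absurd hpp (by simpa using not_isPrimePow_one)
      · exact Or.inr ⟨j, hj0, hj, by simp, hcyc⟩
    · rcases Nat.eq_zero_or_pos j with rfl | hj0
      · exact Or.inl ⟨i, hi0, hi, by simp, hcyc⟩
      · -- a prime power cannot be divisible by both `p` and `q`
        have hu := (isPrimePow_iff_unique_prime_dvd).1 hpp
        exact absurd (hu.unique ⟨hp, (dvd_pow_self p hi0.ne').mul_right _⟩
          ⟨hq, (dvd_pow_self q hj0.ne').mul_left _⟩) hne
  · rintro (⟨k, hk1, hk4, rfl, h⟩ | ⟨l, hl1, hl2, rfl, h⟩)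
    · refine ⟨⟨?_, NeZero.ne M⟩, hp.isPrimePow.pow (by omega), ?_⟩
      · have := (hd k 0 4 2).2 ⟨hk4, by omega⟩
        rw [hM]; simpa using this
      · have := (hc k 0 hk4 (by omega)).2 h
        simpa using this
    · refine ⟨⟨?_, NeZero.ne M⟩, hq.isPrimePow.pow (by omega), ?_⟩
      · have := (hd 0 l 4 2).2 ⟨by omega, hl2⟩
        rw [hM]; simpa using this
      · have := (hc 0 l (by omega) hl2).2 h
        simpa using this

lemma pow_ne_pow_prime (hp : p.Prime) (hq : q.Prime) (hne : p ≠ q) {k l : ℕ} (hk : k ≠ 0) :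
    p ^ k ≠ q ^ l := by
  intro h
  exact hne ((Nat.prime_dvd_prime_iff_eq hp hq).1 (hp.dvd_of_dvd_pow (h ▸ dvd_pow_self p hk)))

/-- (T1) holds when exactly two powers of `p` and one power of `q` belong to `S_F`. -/
lemma stepFn_T1 (hp : p.Prime) (hq : q.Prime) (hne : p ≠ q) (hM : M = p ^ 4 * q ^ 2)
    (F : ℕ → ℕ → ℝ)
    (hF : ∀ ξ, fhat M (stepFn p q M F) ξ = ((p ^ 2 * q : ℕ) : ℂ) * (stepFn p q M F ξ : ℂ))
    (h0 : F 0 0 = 1) (k₁ k₂ l : ℕ) (hk : k₁ < k₂) (hk₁ : 1 ≤ k₁) (hk₂ : k₂ ≤ 4) (hl₁ : 1 ≤ l)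
    (hl₂ : l ≤ 2) (hFk : ∀ k, 1 ≤ k → k ≤ 4 → (F k 0 = 0 ↔ k = k₁ ∨ k = k₂))
    (hFl : ∀ j, 1 ≤ j → j ≤ 2 → (F 0 j = 0 ↔ j = l)) :
    satT1 M (stepFn p q M F) := by
  have hS : SF M (stepFn p q M F) = {p ^ k₁, p ^ k₂, q ^ l} := by
    ext s
    rw [mem_SF hp hq hne hM F hF]
    simp only [mem_insert, mem_singleton]
    constructor
    · rintro (⟨k, h1, h2, rfl, h⟩ | ⟨j, h1, h2, rfl, h⟩)
      · rcases (hFk k h1 h2).1 h with rfl | rfl <;> simp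
      · rw [(hFl j h1 h2).1 h]; simp
    · rintro (rfl | rfl | rfl)
      · exact Or.inl ⟨k₁, hk₁, by omega, rfl, (hFk _ hk₁ (by omega)).2 (Or.inl rfl)⟩
      · exact Or.inl ⟨k₂, by omega, hk₂, rfl, (hFk _ (by omega) hk₂).2 (Or.inr rfl)⟩
      · exact Or.inr ⟨l, hl₁, hl₂, rfl, (hFl _ hl₁ hl₂).2 rfl⟩
  have hsum : ((∑ z, stepFn p q M F z : ℝ) : ℂ) = ((p ^ 2 * q : ℕ) : ℂ) := by
    have h := hF 0
    rw [stepFn_zero hp hq hne hM, h0] at h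
    simp only [fhat, ZMod.val_zero, Nat.cast_zero, mul_zero, zero_div, Complex.exp_zero,
      mul_one, Complex.ofReal_one] at h
    rw [← h]
    push_cast
    rfl
  have hsum' : ∑ z, stepFn p q M F z = ((p ^ 2 * q : ℕ) : ℝ) := by exact_mod_cast hsum
  unfold satT1
  have hkk : p ^ k₁ ≠ p ^ k₂ := fun h => by
    have := Nat.pow_right_injective hp.two_le h
    omega
  rw [hsum', hS, Finset.prod_insert, Finset.prod_insert, Finset.prod_singleton,
    hp.pow_minFac (by omega), hp.pow_minFac (by omega), hq.pow_minFac (by omega)]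
  · push_cast; ring
  · simpa using pow_ne_pow_prime hp hq hne (by omega)
  · simp only [mem_insert, mem_singleton, not_or]
    exact ⟨hkk, pow_ne_pow_prime hp hq hne (by omega)⟩

/-- (T2) fails as soon as the function vanishes at orders `p^k` and `q^l` but not at `p^k q^l`. -/
lemma stepFn_not_T2 (hp : p.Prime) (hq : q.Prime) (hne : p ≠ q) (hM : M = p ^ 4 * q ^ 2)
    (F : ℕ → ℕ → ℝ)
    (hF : ∀ ξ, fhat M (stepFn p q M F) ξ = ((p ^ 2 * q : ℕ) : ℂ) * (stepFn p q M F ξ : ℂ))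
    (k l : ℕ) (hk₁ : 1 ≤ k) (hk₂ : k ≤ 4) (hl₁ : 1 ≤ l) (hl₂ : l ≤ 2)
    (hFk : F k 0 = 0) (hFl : F 0 l = 0) (hkl : F k l ≠ 0) :
    ¬ satT2 M (stepFn p q M F) := by
  intro hT
  have hpq : p ^ k ≠ q ^ l := pow_ne_pow_prime hp hq hne (by omega)
  have hmp : (p ^ k).minFac = p := hp.pow_minFac (by omega)
  have hmq : (q ^ l).minFac = q := hq.pow_minFac (by omega)
  have h := hT {p ^ k, q ^ l} (by simp) ?_ ?_
  · rw [Finset.prod_pair hpq, cycDvd_iff hp hq hne hM F hF k l hk₂ hl₂] at h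
    exact hkl h
  · intro s hs
    rw [mem_SF hp hq hne hM F hF]
    simp only [mem_insert, mem_singleton] at hs
    rcases hs with rfl | rfl
    · exact Or.inl ⟨k, hk₁, hk₂, rfl, hFk⟩
    · exact Or.inr ⟨l, hl₁, hl₂, rfl, hFl⟩
  · intro s hs t ht hst
    simp only [mem_insert, mem_singleton] at hs ht
    rcases hs with rfl | rfl <;> rcases ht with rfl | rfl
    · exact absurd rfl hst
    · rw [hmp, hmq]; exact hne
    · rw [hmp, hmq]; exact hne.symm
    · exact absurd rfl hst

end Step

/-! ### The two eigenfunctions -/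

/-- Values of `f`: `fval x y k l` is the value on elements of order `p^k q^l`, for
`x = p`, `y = q`. -/
noncomputable def fval (x y : ℝ) : ℕ → ℕ → ℝ
  | 0, 0 => 1
  | 0, 1 => x * (y - x) / (2 * x * y - y - x ^ 2)
  | 1, 0 => y * (x - 1) / (2 * x * y - y - x ^ 2)
  | 2, 1 => y / (2 * x * y - y - x ^ 2)
  | 3, 2 => 1 / (2 * x * y - y - x ^ 2)
  | 4, 0 => (y - x) / (x * (2 * x * y - y - x ^ 2))
  | 4, 1 => (y - x) / (x * (2 * x * y - y - x ^ 2))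
  | _, _ => 0

/-- Values of `g`: `gval x y k l` is the value on elements of order `p^k q^l`, for
`x = p`, `y = q`. -/
noncomputable def gval (x y : ℝ) : ℕ → ℕ → ℝ
  | 0, 0 => 1
  | 0, 2 => (y - x) / (y * (y - 1))
  | 1, 1 => 1 / (y - 1)
  | 1, 2 => (y - x) / (y * (y - 1))
  | 2, 0 => (y - x) / (x * (y - 1))
  | 3, 0 => (x * y * (y - x) + (x ^ 2 - y)) / (x ^ 2 * y * (y - 1))
  | 3, 1 => (x ^ 2 - y) / (x ^ 2 * y * (y - 1))
  | 4, 2 => 1 / (x ^ 2 * (y - 1))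
  | _, _ => 0

lemma fval_eig (x y : ℝ) (hx : x ≠ 0) (hD : 2 * x * y - y - x ^ 2 ≠ 0) :
    ∀ a ∈ range 5, ∀ b ∈ range 3, coef (fval x y) (4 - a) (2 - b) * (x ^ a * y ^ b)
      = x ^ 2 * y * coef (fval x y) a b := by
  intro a ha b hb
  simp only [mem_range] at ha hb
  -- `field_simp` clears the common denominator only when it is an atom
  generalize hE : 2 * x * y - y - x ^ 2 = D at hD
  interval_cases a <;> interval_cases b <;>
    simp [coef, fval, hE, -mul_eq_mul_left_iff, -mul_eq_mul_right_iff, -mul_eq_zero,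
      -zero_eq_mul] <;>
    field_simp <;> subst hE <;> ring

lemma gval_eig (x y : ℝ) (hx : x ≠ 0) (hy : y ≠ 0) (hD : y - 1 ≠ 0) :
    ∀ a ∈ range 5, ∀ b ∈ range 3, coef (gval x y) (4 - a) (2 - b) * (x ^ a * y ^ b)
      = x ^ 2 * y * coef (gval x y) a b := by
  intro a ha b hb
  simp only [mem_range] at ha hb
  interval_cases a <;> interval_cases b <;> simp [coef, gval, -mul_eq_mul_left_iff, -mul_eq_mul_right_iff, -mul_eq_zero,
    -zero_eq_mul] <;> field_simp <;> ring

lemma fval_pos (x y : ℝ) (hx : 1 < x) (hxy : x < y) :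
    0 < fval x y 0 0 ∧ 0 < fval x y 0 1 ∧ 0 < fval x y 1 0 ∧ 0 < fval x y 2 1 ∧
      0 < fval x y 3 2 ∧ 0 < fval x y 4 0 ∧ 0 < fval x y 4 1 := by
  have h1 : 0 < x - 1 := by linarith
  have h2 : 0 < y - x := by linarith
  have hx0 : 0 < x := by linarith
  have hy0 : 0 < y := by linarith
  have hD : 0 < 2 * x * y - y - x ^ 2 := by nlinarith [mul_pos hx0 h2, mul_pos hy0 h1]
  simp only [fval]
  refine ⟨?_, ?_, ?_, ?_, ?_, ?_, ?_⟩ <;> positivity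

lemma gval_pos (x y : ℝ) (hx : 1 < x) (hxy : x < y) (hyx : y < x ^ 2) :
    0 < gval x y 0 0 ∧ 0 < gval x y 0 2 ∧ 0 < gval x y 1 1 ∧ 0 < gval x y 1 2 ∧
      0 < gval x y 2 0 ∧ 0 < gval x y 3 0 ∧ 0 < gval x y 3 1 ∧ 0 < gval x y 4 2 := by
  have h1 : 0 < y - 1 := by linarith
  have h2 : 0 < y - x := by linarith
  have h3 : 0 < x ^ 2 - y := by linarith
  have hx0 : 0 < x := by linarith
  have hy0 : 0 < y := by linarith
  simp only [gval]
  refine ⟨?_, ?_, ?_, ?_, ?_, ?_, ?_, ?_⟩ <;> positivity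

/-- For primes `p < q < p^2` and `M = p^4 q^2`, there exist nonnegative
step functions `f, g` with `f(0) = g(0) = 1` that are eigenfunctions of the Fourier
transform with eigenvalue `p^2 q = √M`, whose supports intersect only at `0`, with
`f ∗ g = 1_{ℤ_M}`, both mask polynomials satisfying (T1) and neither satisfying (T2). -/
theorem statement1 (p q : ℕ) (hp : p.Prime) (hq : q.Prime)
    (hpq : p < q) (hqp : q < p ^ 2) (M : ℕ) [NeZero M] (hM : M = p ^ 4 * q ^ 2) :
    ∃ f g : ZMod M → ℝ,
      IsStepFun M f ∧ IsStepFun M g ∧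
      f 0 = 1 ∧ g 0 = 1 ∧
      (∀ z, 0 ≤ f z) ∧ (∀ z, 0 ≤ g z) ∧
      (∀ ξ, fhat M f ξ = ((p ^ 2 * q : ℕ) : ℂ) * (f ξ : ℂ)) ∧
      (∀ ξ, fhat M g ξ = ((p ^ 2 * q : ℕ) : ℂ) * (g ξ : ℂ)) ∧
      (∀ z : ZMod M, f z ≠ 0 → g z ≠ 0 → z = 0) ∧
      (∀ x, conv M f g x = 1) ∧
      satT1 M f ∧ satT1 M g ∧
      ¬ satT2 M f ∧ ¬ satT2 M g := by
  have hne : p ≠ q := hpq.ne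
  have hx : (1 : ℝ) < p := by exact_mod_cast hp.one_lt
  have hxy : (p : ℝ) < q := by exact_mod_cast hpq
  have hyx : (q : ℝ) < (p : ℝ) ^ 2 := by exact_mod_cast hqp
  have hD : 2 * (p : ℝ) * q - q - (p : ℝ) ^ 2 ≠ 0 := by nlinarith
  obtain ⟨-, f01, f10, f21, f32, f40, f41⟩ := fval_pos p q hx hxy
  obtain ⟨-, g02, g11, g12, g20, g30, g31, g42⟩ := gval_pos p q hx hxy hyx
  have hfe := fhat_stepFn (M := M) hp hq hne hM (fval p q)
    (fval_eig p q (by linarith) hD)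
  have hge := fhat_stepFn (M := M) hp hq hne hM (gval p q)
    (gval_eig p q (by linarith) (by linarith) (by linarith))
  have hf0 : stepFn p q M (fval p q) 0 = 1 := stepFn_zero hp hq hne hM _
  have hg0 : stepFn p q M (gval p q) 0 = 1 := stepFn_zero hp hq hne hM _
  have hdisj : ∀ z : ZMod M, stepFn p q M (fval p q) z ≠ 0 →
      stepFn p q M (gval p q) z ≠ 0 → z = 0 := by
    intro z
    obtain ⟨i, j, hi, hj, h⟩ := gcd_form hp hq hM z.val
    rw [stepFn_eq hp hq hne _ h, stepFn_eq hp hq hne _ h]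
    by_cases hij : i = 4 ∧ j = 2
    · obtain ⟨rfl, rfl⟩ := hij
      intro _ _
      -- here `gcd(z, M) = M`, so `M` divides `z`
      have hdvd : M ∣ z.val := Nat.gcd_eq_right_iff_dvd.1 (h.trans hM.symm)
      exact (ZMod.val_eq_zero z).1 (Nat.eq_zero_of_dvd_of_lt hdvd (ZMod.val_lt z))
    · intro h1 h2
      exfalso
      interval_cases i <;> interval_cases j <;> simp_all [fval, gval]
  refine ⟨stepFn p q M (fval p q), stepFn p q M (gval p q), stepFn_isStepFun _,
    stepFn_isStepFun _, hf0, hg0, ?_, ?_, hfe, hge, hdisj,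
    conv_eq_one_s1 M (p ^ 2 * q) (by rw [hM]; ring) _ _ hfe hge hf0 hg0 hdisj,
    stepFn_T1 hp hq hne hM _ hfe rfl 2 3 2 (by norm_num) (by norm_num) (by norm_num)
      (by norm_num) (by norm_num) ?_ ?_,
    stepFn_T1 hp hq hne hM _ hge rfl 1 4 1 (by norm_num) (by norm_num) (by norm_num)
      (by norm_num) (by norm_num) ?_ ?_,
    stepFn_not_T2 hp hq hne hM _ hfe 3 2 (by norm_num) (by norm_num) (by norm_num)
      (by norm_num) rfl rfl f32.ne',
    stepFn_not_T2 hp hq hne hM _ hge 1 1 (by norm_num) (by norm_num) (by norm_num)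
      (by norm_num) rfl rfl g11.ne'⟩
  · intro z
    obtain ⟨i, j, hi, hj, h⟩ := gcd_form hp hq hM z.val
    rw [stepFn_eq hp hq hne _ h]
    interval_cases i <;> interval_cases j <;>
      first | exact le_rfl | exact zero_le_one | exact f01.le | exact f10.le | exact f21.le
            | exact f32.le | exact f40.le
  · intro z
    obtain ⟨i, j, hi, hj, h⟩ := gcd_form hp hq hM z.val
    rw [stepFn_eq hp hq hne _ h]
    interval_cases i <;> interval_cases j <;>
      first | exact le_rfl | exact zero_le_one | exact g02.le | exact g11.le | exact g12.le
            | exact g20.le | exact g30.le | exact g31.le | exact g42.le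
  · intro k h1 h2
    have z2 : fval p q 2 0 = 0 := rfl
    have z3 : fval p q 3 0 = 0 := rfl
    interval_cases k <;> simp [f10.ne', f40.ne', z2, z3]
  · intro j h1 h2
    have z2 : fval p q 0 2 = 0 := rfl
    interval_cases j <;> simp [f01.ne', z2]
  · intro k h1 h2
    have z1 : gval p q 1 0 = 0 := rfl
    have z4 : gval p q 4 0 = 0 := rfl
    interval_cases k <;> simp [g20.ne', g30.ne', z1, z4]
  · intro j h1 h2
    have z1 : gval p q 0 1 = 0 := rfl
    interval_cases j <;> simp [g02.ne', z1]
end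

section
/- Let H ⊆ ℤ_M be a union of step classes containing 0, with standard complement H′. There exists a tiling A ⊕ B = ℤ_M with Div*(A) ⊆ H and Div*(B) ⊆ H′ if and only if ω(H)·ω(H′) = M. -/
/-!
The theorem rests on one pigeonhole argument. If all differences of `A` lie in `H` and all
differences of `B` lie in the standard complement `Hᶜ ∪ {0}`, then `(a, b) ↦ a + b` is injective
on `A × B`: from `a + b = a' + b'` the element `a - a' = b' - b` lies in both sets, hence is `0`.
So `|A| |B| ≤ M` (`card_mul_card_le`), and `|A| |B| = M` exactly when `A ⊕ B = ℤ_M`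
(`isTiling_of_card_mul_card`, `IsTiling.card_mul_card`).

Applied to cliques of maximal size (`exists_clique`), this gives `ω(H) ω(H') ≤ M`, and equality
makes those two cliques a tiling pair. A tiling pair conversely consists of two cliques, so
`M = |A| |B| ≤ ω(H) ω(H')`. The conditions on `Div*` and the clique conditions agree because both
`H` and `H'` are unions of step classes (`divStar_subset_iff`, `IsStepSet.standardCompl`).
-/

open Finset

/-- All differences of elements of `C` lie in `H`; these are the sets that `cliqueNum M H`
maximises over. -/
def IsDiffClique (M : ℕ) (H : Set (ZMod M)) (C : Finset (ZMod M)) : Prop :=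
  ∀ x ∈ C, ∀ y ∈ C, x - y ∈ H

theorem bddAbove_clique (M : ℕ) [NeZero M] (H : Set (ZMod M)) :
    BddAbove {n | ∃ C : Finset (ZMod M), (∀ x ∈ C, ∀ y ∈ C, x - y ∈ H) ∧ C.card = n} := by
  refine ⟨M, ?_⟩
  rintro n ⟨C, -, rfl⟩
  simpa [ZMod.card] using Finset.card_le_univ C

theorem IsDiffClique.card_le_cliqueNum {M : ℕ} [NeZero M] {H : Set (ZMod M)}
    {C : Finset (ZMod M)} (hC : IsDiffClique M H C) : C.card ≤ cliqueNum M H :=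
  le_csSup (bddAbove_clique M H) ⟨C, hC, rfl⟩

/-- The supremum defining the clique number is attained. -/
theorem exists_clique (M : ℕ) [NeZero M] (H : Set (ZMod M)) :
    ∃ C : Finset (ZMod M), IsDiffClique M H C ∧ C.card = cliqueNum M H := by
  have hne : {n | ∃ C : Finset (ZMod M), (∀ x ∈ C, ∀ y ∈ C, x - y ∈ H) ∧ C.card = n}.Nonempty :=
    ⟨0, ∅, by simp, rfl⟩
  exact Nat.sSup_mem hne (bddAbove_clique M H)

/-- For a union of step classes, passing from `Div(A)` to its step closure `Div*(A)` adds no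
constraint. -/
theorem divStar_subset_iff {M : ℕ} [NeZero M] {H : Set (ZMod M)} (hstep : IsStepSet M H)
    (A : Finset (ZMod M)) : divStar M A ⊆ H ↔ IsDiffClique M H A := by
  constructor
  · intro h x hx y hy
    exact h ⟨x, hx, y, hy, rfl⟩
  · rintro h z ⟨a, ha, a', ha', hz⟩
    exact (hstep _ _ hz).2 (h a ha a' ha')

/-- The step class of `0` is the singleton `{0}`. -/
theorem eq_zero_iff_of_gcd_eq {M : ℕ} [NeZero M] {z w : ZMod M}
    (h : Nat.gcd z.val M = Nat.gcd w.val M) : z = 0 ↔ w = 0 := by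
  have key (x : ZMod M) : x = 0 ↔ Nat.gcd x.val M = M := by
    rw [Nat.gcd_eq_right_iff_dvd, ← ZMod.natCast_eq_zero_iff, ZMod.natCast_zmod_val]
  rw [key z, key w, h]

theorem IsStepSet.standardCompl {M : ℕ} [NeZero M] {H : Set (ZMod M)} (hstep : IsStepSet M H) :
    IsStepSet M (Hᶜ ∪ {0}) := by
  intro z w h
  simp only [Set.mem_union, Set.mem_compl_iff, Set.mem_singleton_iff, hstep z w h,
    eq_zero_iff_of_gcd_eq h]

theorem add_injOn_of_clique {M : ℕ} {H : Set (ZMod M)} {A B : Finset (ZMod M)}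
    (hA : IsDiffClique M H A) (hB : IsDiffClique M (Hᶜ ∪ {0}) B) :
    Set.InjOn (fun ab : ZMod M × ZMod M => ab.1 + ab.2) (A ×ˢ B : Finset _) := by
  rintro ⟨a, b⟩ hab ⟨a', b'⟩ hab' h
  simp only [Finset.coe_product, Set.mem_prod, Finset.mem_coe] at hab hab' h
  have hd : a - a' = b' - b := by linear_combination h
  have h1 := hA a hab.1 a' hab'.1
  have h0 : b' - b = 0 := (hB b' hab'.2 b hab.2).resolve_left fun hn => hn (hd ▸ h1)
  rw [Prod.mk.injEq]
  exact ⟨sub_eq_zero.1 (hd.trans h0), (sub_eq_zero.1 h0).symm⟩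

theorem card_mul_card_le {M : ℕ} [NeZero M] {H : Set (ZMod M)} {A B : Finset (ZMod M)}
    (hA : IsDiffClique M H A) (hB : IsDiffClique M (Hᶜ ∪ {0}) B) : A.card * B.card ≤ M := by
  rw [← Finset.card_product, ← Finset.card_image_of_injOn (add_injOn_of_clique hA hB)]
  simpa [ZMod.card] using
    Finset.card_le_univ ((A ×ˢ B).image fun ab : ZMod M × ZMod M => ab.1 + ab.2)

theorem isTiling_of_card_mul_card {M : ℕ} [NeZero M] {H : Set (ZMod M)} {A B : Finset (ZMod M)}
    (hA : IsDiffClique M H A) (hB : IsDiffClique M (Hᶜ ∪ {0}) B) (hcard : A.card * B.card = M) :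
    IsTiling M A B := by
  have hinj := add_injOn_of_clique hA hB
  have himg : (A ×ˢ B).image (fun ab : ZMod M × ZMod M => ab.1 + ab.2) = Finset.univ := by
    rw [← Finset.card_eq_iff_eq_univ, Finset.card_image_of_injOn hinj, Finset.card_product,
      ZMod.card, hcard]
  intro z
  obtain ⟨⟨a, b⟩, hab, hz⟩ := Finset.mem_image.1 (himg ▸ Finset.mem_univ z)
  have hab' := Finset.mem_product.1 hab
  refine ⟨(a, b), ⟨hab'.1, hab'.2, hz⟩, ?_⟩
  rintro ⟨c, d⟩ ⟨hc, hd, hcd⟩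
  exact hinj (Finset.mem_coe.2 (Finset.mem_product.2 ⟨hc, hd⟩)) (Finset.mem_coe.2 hab)
    (hcd.trans hz.symm)

theorem IsTiling.card_mul_card {M : ℕ} [NeZero M] {A B : Finset (ZMod M)}
    (h : IsTiling M A B) : A.card * B.card = M := by
  have hbij : (A ×ˢ B).card = (Finset.univ : Finset (ZMod M)).card := by
    refine Finset.card_bij (fun ab _ => ab.1 + ab.2) (fun _ _ => Finset.mem_univ _) ?_ ?_
    · intro x hx y hy hxy
      rw [Finset.mem_product] at hx hy
      exact (h (y.1 + y.2)).unique ⟨hx.1, hx.2, hxy⟩ ⟨hy.1, hy.2, rfl⟩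
    · intro z _
      obtain ⟨ab, ⟨ha, hb, hz⟩, -⟩ := h z
      exact ⟨ab, Finset.mem_product.2 ⟨ha, hb⟩, hz⟩
  rwa [Finset.card_product, Finset.card_univ, ZMod.card] at hbij

/-- For `H ⊆ ℤ_M` a union of step classes containing `0`, with standard
complement `H' = Hᶜ ∪ {0}`, there is a tiling `A ⊕ B = ℤ_M` with `Div*(A) ⊆ H` and
`Div*(B) ⊆ H'` iff `ω(H)·ω(H') = M`. -/
theorem statement3 (M : ℕ) [NeZero M] (H : Set (ZMod M))
    (hstep : IsStepSet M H) (h0 : (0 : ZMod M) ∈ H) :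
    (∃ A B : Finset (ZMod M), IsTiling M A B ∧
        divStar M A ⊆ H ∧ divStar M B ⊆ Hᶜ ∪ {0}) ↔
      cliqueNum M H * cliqueNum M (Hᶜ ∪ {0}) = M := by
  obtain ⟨C, hC, hCcard⟩ := exists_clique M H
  obtain ⟨D, hD, hDcard⟩ := exists_clique M (Hᶜ ∪ {0})
  constructor
  · rintro ⟨A, B, hT, hA, hB⟩
    rw [divStar_subset_iff hstep] at hA
    rw [divStar_subset_iff hstep.standardCompl] at hB
    apply le_antisymm
    · rw [← hCcard, ← hDcard]
      exact card_mul_card_le hC hD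
    · calc M = A.card * B.card := hT.card_mul_card.symm
        _ ≤ _ := Nat.mul_le_mul hA.card_le_cliqueNum hB.card_le_cliqueNum
  · intro h
    rw [← hCcard, ← hDcard] at h
    exact ⟨C, D, isTiling_of_card_mul_card hC hD h, (divStar_subset_iff hstep C).2 hC,
      (divStar_subset_iff hstep.standardCompl D).2 hD⟩
end

section
/- Let H ⊆ ℤ_M be a union of step classes containing 0, with standard complement H′. If there exists a tiling A ⊕ B = ℤ_M with Div*(A) ⊆ H and Div*(B) ⊆ H′, then |A| = ω(H) = D^+(H) = D^−(H) and |B| = ω(H′) = D^+(H′) = D^−(H′). -/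
/-!
Everything rests on one Fourier inequality. Suppose `ĥ ≥ 0`, `h(0) = 1`, and `h ≤ 0` at every
nonzero difference of elements of `B`. Keeping only the diagonal terms from above, and only the
zero frequency from below in the inversion formula, gives
`M⁻¹ ĥ(0) |B|² ≤ M⁻¹ ∑_ξ ĥ(ξ) |∑_{b ∈ B} e(bξ/M)|² = ∑_{b,b' ∈ B} h(b - b') ≤ |B|`
(`sum_mul_card_le`). If `Div*(B)` meets `H` only in `0`, every function feasible for `D^-(H)`
satisfies this, so `D^-(H) ≤ M/|B|`, which is `|A|` for a tiling (`card_mul_card_of_tiling`).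

In the other direction, the normalised difference function of `A`, averaged over dilations by
the units of `ℤ_M`, is feasible for `D^+(H)` and has total mass `|A|`. It is a step function because
the units act transitively on each step class (`exists_unit_mul_of_gcd_eq`), and its transform is a
positive combination of squares `|∑_{a ∈ A} e(-uaξ/M)|²`. Since `D^+(H) ≤ D^-(H)`, both are `|A|`.

Finally `A` is itself a clique for `H`, and for any clique `C` the sums `c + b` with `c ∈ C`, `b ∈ B`
are distinct, so `|C||B| ≤ M = |A||B|`. The claim for `B` follows by exchanging the two factors.
-/

open Finset

/-! ### The Fourier inequality -/

open ZMod in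
lemma fhat_eq_sum_stdAddChar (M : ℕ) [NeZero M] (f : ZMod M → ℝ) (ξ : ZMod M) :
    fhat M f ξ = ∑ z : ZMod M, (f z : ℂ) * stdAddChar (-(z * ξ)) := by
  unfold fhat
  refine Finset.sum_congr rfl fun z _ => ?_
  congr 1
  have h := ZMod.toCircle_intCast (N := M) (-((z.val : ℤ) * (ξ.val : ℤ)))
  rw [stdAddChar_apply]
  push_cast [ZMod.natCast_zmod_val] at h
  rw [h]
  congr 1
  ring

lemma fhat_zero (M : ℕ) [NeZero M] (f : ZMod M → ℝ) : fhat M f 0 = ((∑ z, f z : ℝ) : ℂ) := by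
  simp [fhat_eq_sum_stdAddChar]

open ZMod in
lemma fourier_inversion (M : ℕ) [NeZero M] (f : ZMod M → ℝ) (x : ZMod M) :
    (M : ℂ) * (f x : ℂ) = ∑ ξ : ZMod M, fhat M f ξ * stdAddChar (ξ * x) := by
  have hM : (M : ℂ) ≠ 0 := by exact_mod_cast NeZero.ne M
  have h := congrFun (ZMod.dft.symm_apply_apply (fun z : ZMod M => (f z : ℂ))) x
  rw [ZMod.invDFT_apply] at h
  rw [← h, smul_eq_mul, mul_inv_cancel_left₀ hM]
  refine Finset.sum_congr rfl fun ξ _ => ?_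
  rw [fhat_eq_sum_stdAddChar, ZMod.dft_apply, smul_eq_mul, mul_comm]
  congr 1
  exact Finset.sum_congr rfl fun z _ => by rw [smul_eq_mul, mul_comm]

/-- A character sum over all differences of a finite set is the square of an absolute value. -/
lemma sum_sum_addChar_sub {G : Type*} [AddCommGroup G] [Finite G] (ψ : AddChar G ℂ)
    (S : Finset G) :
    ∑ b ∈ S, ∑ b' ∈ S, ψ (b - b') = ((Complex.normSq (∑ b ∈ S, ψ b) : ℝ) : ℂ) := by
  rw [Complex.normSq_eq_conj_mul_self, mul_comm, map_sum, Finset.sum_mul_sum]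
  refine Finset.sum_congr rfl fun b _ => Finset.sum_congr rfl fun b' _ => ?_
  rw [sub_eq_add_neg, AddChar.map_add_eq_mul, AddChar.map_neg_eq_conj]

lemma sum_mul_card_le (M : ℕ) [NeZero M] (h : ZMod M → ℝ) (B : Finset (ZMod M))
    (h1 : h 0 = 1) (hpos : ∀ ξ, (fhat M h ξ).im = 0 ∧ 0 ≤ (fhat M h ξ).re)
    (hB : ∀ b ∈ B, ∀ b' ∈ B, b ≠ b' → h (b - b') ≤ 0) :
    (∑ z, h z) * (B.card : ℝ) ≤ M := by
  rcases B.eq_empty_or_nonempty with rfl | hne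
  · simp
  have hcard : (0 : ℝ) < B.card := by exact_mod_cast hne.card_pos
  have hupper : ∑ b ∈ B, ∑ b' ∈ B, h (b - b') ≤ B.card := by
    calc ∑ b ∈ B, ∑ b' ∈ B, h (b - b') ≤ ∑ b ∈ B, ∑ b' ∈ B, (if b = b' then (1 : ℝ) else 0) := by
          refine Finset.sum_le_sum fun b hb => Finset.sum_le_sum fun b' hb' => ?_
          split_ifs with e
          · simp [e, h1]
          · exact hB b hb b' hb' e
      _ = B.card := by simp
  set N : ZMod M → ℝ := fun ξ =>
    Complex.normSq (∑ b ∈ B, (ZMod.stdAddChar (N := M)).mulShift ξ b) with hN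
  have hre : ∀ ξ, fhat M h ξ = (((fhat M h ξ).re : ℝ) : ℂ) := fun ξ =>
    Complex.ext (by simp) (by simp [(hpos ξ).1])
  have key : (M : ℝ) * ∑ b ∈ B, ∑ b' ∈ B, h (b - b') = ∑ ξ, (fhat M h ξ).re * N ξ := by
    have hc : (M : ℂ) * ∑ b ∈ B, ∑ b' ∈ B, (h (b - b') : ℂ)
        = ∑ ξ, (((fhat M h ξ).re : ℝ) : ℂ) * (N ξ : ℂ) := by
      simp only [hN, ← sum_sum_addChar_sub, ← hre]
      simp only [Finset.mul_sum, fourier_inversion, AddChar.mulShift_apply]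
      rw [Finset.sum_comm]
      conv_rhs => rw [Finset.sum_comm]
      rw [Finset.sum_comm]
      refine Finset.sum_congr rfl fun b _ => ?_
      rw [Finset.sum_comm]
    exact_mod_cast hc
  have hN0 : N 0 = (B.card : ℝ) ^ 2 := by
    simp [hN, Complex.normSq_natCast, sq]
  have hlow : (∑ z, h z) * (B.card : ℝ) ^ 2 ≤ ∑ ξ, (fhat M h ξ).re * N ξ := by
    have := Finset.single_le_sum (f := fun ξ => (fhat M h ξ).re * N ξ)
      (fun ξ _ => mul_nonneg (hpos ξ).2 (Complex.normSq_nonneg _)) (Finset.mem_univ 0)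
    simpa only [hN0, fhat_zero, Complex.ofReal_re] using this
  have hM : (0 : ℝ) ≤ M := Nat.cast_nonneg M
  have : (∑ z, h z) * (B.card : ℝ) * B.card ≤ M * B.card := by
    calc _ = (∑ z, h z) * (B.card : ℝ) ^ 2 := by ring
      _ ≤ _ := hlow
      _ = _ := key.symm
      _ ≤ _ := mul_le_mul_of_nonneg_left hupper hM
  exact le_of_mul_le_mul_right this hcard

/-! ### The averaged difference function -/

lemma gcd_val_unit_mul (M : ℕ) [NeZero M] (u : (ZMod M)ˣ) (z : ZMod M) :
    Nat.gcd ((u : ZMod M) * z).val M = Nat.gcd z.val M := by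
  rw [ZMod.val_mul, ← Nat.gcd_rec, Nat.gcd_comm]
  exact Nat.Coprime.gcd_mul_left_cancel _ (ZMod.val_coe_unit_coprime u)

/-- The units of `ℤ_M` act transitively on each step class. -/
lemma exists_unit_mul_of_gcd_eq (M : ℕ) [NeZero M] (z w : ZMod M)
    (h : Nat.gcd z.val M = Nat.gcd w.val M) : ∃ u : (ZMod M)ˣ, w = u * z := by
  obtain ⟨d, hd, _, ⟨u, rfl⟩, rfl⟩ := z.eq_unit_mul_divisor
  obtain ⟨e, he, _, ⟨v, rfl⟩, rfl⟩ := w.eq_unit_mul_divisor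
  have aux : ∀ n : ℕ, n ∣ M → Nat.gcd ((n : ZMod M)).val M = n := fun n hn => by
    rw [ZMod.val_natCast, ← Nat.gcd_rec, Nat.gcd_comm, Nat.gcd_eq_left hn]
  rw [gcd_val_unit_mul, gcd_val_unit_mul, aux d hd, aux e he] at h
  subst h
  exact ⟨v * u⁻¹, by simp [mul_assoc]⟩

/-- The difference function `1_A * 1_{-A}`, averaged over all dilations by units and normalised to
take the value `1` at `0`. -/
noncomputable def diffAvg (M : ℕ) [NeZero M] (A : Finset (ZMod M)) (z : ZMod M) : ℝ :=
  ((A.card : ℝ) * Fintype.card (ZMod M)ˣ)⁻¹ *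
    ∑ u : (ZMod M)ˣ, ∑ a ∈ A, ∑ a' ∈ A, if (u : ZMod M) * (a - a') = z then 1 else 0

lemma sum_diffAvg_mul (M : ℕ) [NeZero M] (A : Finset (ZMod M)) (F : ZMod M → ℂ) :
    ∑ z, (diffAvg M A z : ℂ) * F z = (((A.card : ℝ) * Fintype.card (ZMod M)ˣ)⁻¹ : ℝ) *
      ∑ u : (ZMod M)ˣ, ∑ a ∈ A, ∑ a' ∈ A, F ((u : ZMod M) * (a - a')) := by
  simp only [diffAvg, Complex.ofReal_mul, mul_assoc]
  rw [← Finset.mul_sum]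
  congr 1
  simp only [Complex.ofReal_sum, Finset.sum_mul]
  rw [Finset.sum_comm]
  refine Finset.sum_congr rfl fun u _ => ?_
  rw [Finset.sum_comm]
  refine Finset.sum_congr rfl fun a _ => ?_
  rw [Finset.sum_comm]
  refine Finset.sum_congr rfl fun a' _ => ?_
  rw [Finset.sum_eq_single ((u : ZMod M) * (a - a')) (fun z _ hz => by simp [hz.symm])
    (fun h => absurd (Finset.mem_univ _) h)]
  simp

lemma diffAvg_zero (M : ℕ) [NeZero M] (A : Finset (ZMod M)) (hne : A.Nonempty) :
    diffAvg M A 0 = 1 := by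
  have hA : (A.card : ℝ) ≠ 0 := by exact_mod_cast hne.card_pos.ne'
  have hU : (M.totient : ℝ) ≠ 0 := by exact_mod_cast (Nat.totient_pos.2 (NeZero.pos M)).ne'
  simp only [diffAvg, Units.mul_right_eq_zero, sub_eq_zero]
  simp
  field_simp

lemma sum_diffAvg (M : ℕ) [NeZero M] (A : Finset (ZMod M)) (hne : A.Nonempty) :
    ∑ z, diffAvg M A z = A.card := by
  have hA : (A.card : ℂ) ≠ 0 := by exact_mod_cast hne.card_pos.ne'
  have hU : (M.totient : ℂ) ≠ 0 := by exact_mod_cast (Nat.totient_pos.2 (NeZero.pos M)).ne'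
  have h := sum_diffAvg_mul M A (fun _ => 1)
  have : ((∑ z, diffAvg M A z : ℝ) : ℂ) = (A.card : ℂ) := by
    push_cast
    simp only [mul_one] at h
    rw [h]
    simp
    field_simp
  exact_mod_cast this

lemma diffAvg_isStepFun (M : ℕ) [NeZero M] (A : Finset (ZMod M)) :
    IsStepFun M (diffAvg M A) := by
  intro z w hzw
  obtain ⟨v, rfl⟩ := exists_unit_mul_of_gcd_eq M z w hzw
  unfold diffAvg
  congr 1
  refine Fintype.sum_equiv (Equiv.mulLeft v) _ _ fun u => ?_
  simp [mul_assoc]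

lemma fhat_diffAvg (M : ℕ) [NeZero M] (A : Finset (ZMod M)) (ξ : ZMod M) :
    (fhat M (diffAvg M A) ξ).im = 0 ∧ 0 ≤ (fhat M (diffAvg M A) ξ).re := by
  have h : fhat M (diffAvg M A) ξ = ((((A.card : ℝ) * Fintype.card (ZMod M)ˣ)⁻¹ *
      ∑ u : (ZMod M)ˣ, Complex.normSq
        (∑ a ∈ A, (ZMod.stdAddChar (N := M)).mulShift (-(u * ξ)) a) : ℝ) : ℂ) := by
    rw [fhat_eq_sum_stdAddChar, sum_diffAvg_mul, Complex.ofReal_mul, Complex.ofReal_sum]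
    congr 1
    refine Finset.sum_congr rfl fun u _ => ?_
    rw [← sum_sum_addChar_sub]
    refine Finset.sum_congr rfl fun a _ => Finset.sum_congr rfl fun a' _ => ?_
    rw [AddChar.mulShift_apply]
    congr 1
    ring
  rw [h, Complex.ofReal_im, Complex.ofReal_re]
  exact ⟨rfl, mul_nonneg (by positivity) (Finset.sum_nonneg fun _ _ => Complex.normSq_nonneg _)⟩

lemma diffAvg_nonneg (M : ℕ) [NeZero M] (A : Finset (ZMod M)) (z : ZMod M) :
    0 ≤ diffAvg M A z := by
  unfold diffAvg
  positivity

lemma diffAvg_eq_zero (M : ℕ) [NeZero M] (A : Finset (ZMod M)) (z : ZMod M)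
    (hz : z ∉ divStar M A) : diffAvg M A z = 0 := by
  unfold diffAvg
  refine mul_eq_zero_of_right _ (Finset.sum_eq_zero fun u _ => Finset.sum_eq_zero fun a ha =>
    Finset.sum_eq_zero fun a' ha' => if_neg ?_)
  rintro rfl
  exact hz ⟨a, ha, a', ha', gcd_val_unit_mul M u _⟩

/-! ### Tilings -/

lemma card_mul_card_of_tiling (M : ℕ) [NeZero M] (A B : Finset (ZMod M))
    (htile : IsTiling M A B) : A.card * B.card = M := by
  rw [← Finset.card_product]
  refine Eq.trans ?_ (Finset.card_univ.trans (ZMod.card M))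
  refine Finset.card_bij (fun ab _ => ab.1 + ab.2) (fun _ _ => Finset.mem_univ _) ?_ ?_
  · intro p hp q hq e
    rw [Finset.mem_product] at hp hq
    exact (htile (q.1 + q.2)).unique ⟨hp.1, hp.2, e⟩ ⟨hq.1, hq.2, rfl⟩
  · intro z _
    obtain ⟨p, ⟨h1, h2, h3⟩, -⟩ := htile z
    exact ⟨p, Finset.mem_product.2 ⟨h1, h2⟩, h3⟩

lemma sub_mem_divStar (M : ℕ) [NeZero M] {A : Finset (ZMod M)} {a a' : ZMod M} (ha : a ∈ A)
    (ha' : a' ∈ A) : a - a' ∈ divStar M A := ⟨a, ha, a', ha', rfl⟩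

/-- The half of the result about the factor `A`. The relation between `H` and `H'`
enters as `H ∩ H' ⊆ {0}`, a condition symmetric in the two factors. -/
lemma tiling_params (M : ℕ) [NeZero M] (H H' : Set (ZMod M))
    (hHH : ∀ z ∈ H, z ∈ H' → z = 0) (A B : Finset (ZMod M)) (hcard : A.card * B.card = M)
    (hA : divStar M A ⊆ H) (hB : divStar M B ⊆ H') :
    A.card = cliqueNum M H ∧ (cliqueNum M H : ℝ) = Dplus M H ∧ Dplus M H = Dminus M H := by
  have hMpos : 0 < M := NeZero.pos M
  have hApos : 0 < A.card := Nat.pos_of_ne_zero fun h => by simp [h] at hcard; omega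
  have hBpos : 0 < B.card := Nat.pos_of_ne_zero fun h => by simp [h] at hcard; omega
  have hAne : A.Nonempty := Finset.card_pos.1 hApos
  have hclique : IsGreatest
      {n | ∃ C : Finset (ZMod M), (∀ x ∈ C, ∀ y ∈ C, x - y ∈ H) ∧ C.card = n} A.card := by
    refine ⟨⟨A, fun x hx y hy => hA (sub_mem_divStar M hx hy), rfl⟩, ?_⟩
    rintro _ ⟨C, hC, rfl⟩
    have hle : C.card * B.card ≤ A.card * B.card := by
      rw [hcard, ← Finset.card_product]
      refine le_of_le_of_eq ?_ (Finset.card_univ.trans (ZMod.card M))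
      refine Finset.card_le_card_of_injOn (fun cb => cb.1 + cb.2)
        (fun _ _ => Finset.mem_coe.2 (Finset.mem_univ _)) ?_
      rintro ⟨c, b⟩ hp ⟨c', b'⟩ hq e
      simp only [Finset.coe_product, Set.mem_prod, Finset.mem_coe] at hp hq e
      -- `c - c' = b' - b` lies in both `H` and `H'`
      have e' : c - c' = b' - b := by linear_combination e
      have h0 : c - c' = 0 :=
        hHH _ (hC c hp.1 c' hq.1) (e' ▸ hB (sub_mem_divStar M hq.2 hp.2))
      have h1 : b' - b = 0 := e' ▸ h0
      rw [sub_eq_zero.1 h0, sub_eq_zero.1 h1]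
    exact Nat.le_of_mul_le_mul_right hle hBpos
  have hupper : ∀ h : ZMod M → ℝ, h 0 = 1 →
      (∀ ξ, (fhat M h ξ).im = 0 ∧ 0 ≤ (fhat M h ξ).re) → (∀ z ∉ H, h z ≤ 0) →
      ∑ z, h z ≤ A.card := by
    intro h h1 hpos hneg
    have hle := sum_mul_card_le M h B h1 hpos fun b hb b' hb' hne =>
      hneg _ fun hmem => hne (sub_eq_zero.1 (hHH _ hmem (hB (sub_mem_divStar M hb hb'))))
    replace hle := hle.trans_eq ((congrArg Nat.cast hcard.symm).trans (Nat.cast_mul _ _))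
    exact le_of_mul_le_mul_right hle (by exact_mod_cast hBpos)
  have hzero : ∀ z ∉ H, diffAvg M A z = 0 := fun z hz =>
    diffAvg_eq_zero M A z fun hmem => hz (hA hmem)
  have hplus : Dplus M H = A.card := by
    refine IsGreatest.csSup_eq ⟨⟨diffAvg M A, diffAvg_isStepFun M A, diffAvg_zero M A hAne,
      fhat_diffAvg M A, fun z _ => diffAvg_nonneg M A z, hzero, (sum_diffAvg M A hAne).symm⟩, ?_⟩
    rintro _ ⟨h, -, h1, hpos, -, hz, rfl⟩
    exact hupper h h1 hpos fun z hzH => (hz z hzH).le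
  have hminus : Dminus M H = A.card := by
    refine IsGreatest.csSup_eq ⟨⟨diffAvg M A, diffAvg_isStepFun M A, diffAvg_zero M A hAne,
      fhat_diffAvg M A, fun z hz => (hzero z hz).le, (sum_diffAvg M A hAne).symm⟩, ?_⟩
    rintro _ ⟨h, -, h1, hpos, hneg, rfl⟩
    exact hupper h h1 hpos hneg
  have hom : cliqueNum M H = A.card := hclique.csSup_eq
  exact ⟨hom.symm, by rw [hom, hplus], by rw [hplus, hminus]⟩

/-- If `A ⊕ B = ℤ_M` is a tiling with `Div*(A) ⊆ H` and `Div*(B) ⊆ H'`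
(`H` a union of step classes containing `0`, `H' = Hᶜ ∪ {0}` its standard complement),
then `|A| = ω(H) = D^+(H) = D^−(H)` and `|B| = ω(H') = D^+(H') = D^−(H')`. -/
theorem statement5 (M : ℕ) [NeZero M] (H : Set (ZMod M))
    (hstep : IsStepSet M H) (h0 : (0 : ZMod M) ∈ H)
    (H' : Set (ZMod M)) (hH' : H' = Hᶜ ∪ {0})
    (A B : Finset (ZMod M)) (htile : IsTiling M A B)
    (hA : divStar M A ⊆ H) (hB : divStar M B ⊆ H') :
    A.card = cliqueNum M H ∧ (cliqueNum M H : ℝ) = Dplus M H ∧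
      Dplus M H = Dminus M H ∧
    B.card = cliqueNum M H' ∧ (cliqueNum M H' : ℝ) = Dplus M H' ∧
      Dplus M H' = Dminus M H' := by
  subst hH'
  have hinter : ∀ z ∈ H, z ∈ Hᶜ ∪ {0} → z = 0 := fun z hz hz' =>
    hz'.elim (fun h => absurd hz h) id
  have hcard := card_mul_card_of_tiling M A B htile
  obtain ⟨h1, h2, h3⟩ := tiling_params M H _ hinter A B hcard hA hB
  obtain ⟨h4, h5, h6⟩ := tiling_params M _ H (fun z hz hz' => hinter z hz' hz) B A
    (by rw [mul_comm, hcard]) hB hA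
  exact ⟨h1, h2, h3, h4, h5, h6⟩
end
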